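/- arXiv:1206.4132 — 5 statements merged into one kernel-verified Lean document; each statement's English description precedes it below -/
import Mathlib

section
/- Let M be a C^∞-smooth real hypersurface germ at the origin in ℂ² defined by ρ(z₁,z₂) = Re z₁ + P(z₂) + (Im z₁)·Q(z₂, Im z₁) = 0, where P and Q are C^∞-smooth with P(0)=0, dP(0)=0, Q(0,0)=0. Assume that the Wirtinger derivatives satisfy (∂^N P/∂z₂^N)(0) = 0 for every nonnegative integer N (i.e., no finite-order jet of P contains a nonzero harmonic term). Then the origin is a point of D'Angelo infinite type of M if and only if P(z₂) vanishes to infinite order at z₂ = 0 (all partial derivatives of P of all orders vanish at 0). -/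
/-!
If `P` is flat at `0`, the line `t ↦ (0, t)` has infinite order of contact
(`isInfiniteType_of_flat`).

Conversely, let `P` vanish to finite order `m`, and suppose a disc `h = (u, v)` with `ν(h) = k`
satisfies `ν(ρ ∘ h) > m k`. Then `Re u + P(v) + Im u · Q(v, Im u) = o(|t|^(mk))`, where the last
term is `o(u)` and `P(v) = O(|v|^m)`.

* If `u` has order less than `m` times that of `v`, then all terms except `Re u` are `o(u)`, so
  `Re u = o(u)`. As `u` is an open map near `0`, this gives `Re w = o(w)` as `w → 0`, which is
  false (`not_re_isLittleO`).
* Otherwise `u = γ v^m + o(v^m)` for a constant `γ`, hence `P(v) + Re (γ v^m) = o(v^m)`. As `v` is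
  an open map near `0`, `P(z) + Re (γ z^m) = o(|z|^m)`. Taking `∂^m/∂z^m` at `0` gives `γ = 0`, so
  `P = o(|z|^m)`, contradicting the choice of `m` (`iteratedFDeriv_eq_zero_of_harmonic_approx`).

Derivatives at `0` and asymptotics are related by Taylor's estimate
`isBigO_pow_of_iteratedFDeriv_eq_zero` and its converse `iteratedFDeriv_eq_zero_of_isLittleO`. The
converse is proved by interpolation rather than through the symmetry of higher derivatives.
-/

open Complex Metric Filter Topology Asymptotics

/-- The Wirtinger derivative ∂f/∂z = (1/2)(∂f/∂x - i ∂f/∂y) of a function f : ℂ → ℂ. -/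
noncomputable def wirtinger (f : ℂ → ℂ) (z : ℂ) : ℂ :=
  (1 / 2) * (fderiv ℝ f z 1 - Complex.I * fderiv ℝ f z Complex.I)

/-- The Wirtinger derivative of a real-valued function on ℂ. -/
noncomputable def wirtingerR (f : ℂ → ℝ) (z : ℂ) : ℂ :=
  wirtinger (fun w => (f w : ℂ)) z

/-- Iterated Wirtinger derivative ∂^N/∂z^N. -/
noncomputable def wirtingerIter : ℕ → (ℂ → ℂ) → (ℂ → ℂ)
  | 0, f => f
  | n + 1, f => wirtinger (wirtingerIter n f)

/-- The Wirtinger derivative of ρ : ℂ × ℂ → ℝ in the first variable. -/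
noncomputable def wirtinger1 (ρ : ℂ × ℂ → ℝ) (z : ℂ × ℂ) : ℂ :=
  wirtinger (fun w => (ρ (w, z.2) : ℂ)) z.1

/-- The Wirtinger derivative of ρ : ℂ × ℂ → ℝ in the second variable. -/
noncomputable def wirtinger2 (ρ : ℂ × ℂ → ℝ) (z : ℂ × ℂ) : ℂ :=
  wirtinger (fun w => (ρ (z.1, w) : ℂ)) z.2

/-- The vanishing order ν(f) of a smooth function at 0: the least n such that the n-th
derivative of f at 0 is nonzero, and +∞ if all derivatives vanish at 0. -/
noncomputable def vanishOrder {E : Type*} [NormedAddCommGroup E] [NormedSpace ℝ E]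
    (f : ℂ → E) : ℕ∞ :=
  sInf {m : ℕ∞ | ∃ n : ℕ, m = (n : ℕ∞) ∧ iteratedFDeriv ℝ n f 0 ≠ 0}

/-- The origin is a point of D'Angelo infinite type for the hypersurface {ρ = 0}:
for every ℓ > 0 there is a holomorphic disc h through 0 with ν(h) finite and
ν(ρ ∘ h) / ν(h) > ℓ. -/
def IsInfiniteType (ρ : ℂ × ℂ → ℝ) : Prop :=
  ∀ ℓ : ℕ, 0 < ℓ → ∃ h : ℂ → ℂ × ℂ,
    DifferentiableOn ℂ h (Metric.ball 0 1) ∧ h 0 = 0 ∧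
    vanishOrder h ≠ ⊤ ∧ (ℓ : ℕ∞) * vanishOrder h < vanishOrder (fun t => ρ (h t))

universe u

/-! ### Derivatives at the origin and asymptotics -/

theorem iteratedFDeriv_fderiv_eq_zero_iff {E : Type*} [NormedAddCommGroup E] [NormedSpace ℝ E]
    {f : ℂ → E} {k : ℕ} :
    iteratedFDeriv ℝ k (fderiv ℝ f) 0 = 0 ↔ iteratedFDeriv ℝ (k + 1) f 0 = 0 := by
  rw [← norm_eq_zero, norm_iteratedFDeriv_fderiv, norm_eq_zero]

theorem contDiffAt_fderiv_top {E : Type*} [NormedAddCommGroup E] [NormedSpace ℝ E]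
    {f : ℂ → E} (hf : ContDiffAt ℝ (⊤ : ℕ∞) f 0) : ContDiffAt ℝ (⊤ : ℕ∞) (fderiv ℝ f) 0 :=
  hf.fderiv_right (by simp)

theorem eventually_differentiableAt {E : Type*} [NormedAddCommGroup E] [NormedSpace ℝ E]
    {f : ℂ → E} (hf : ContDiffAt ℝ (⊤ : ℕ∞) f 0) : ∀ᶠ z in 𝓝 (0 : ℂ), DifferentiableAt ℝ f z := by
  have h1 : ContDiffAt ℝ 1 f 0 := hf.of_le (by exact_mod_cast le_top)
  filter_upwards [h1.eventually (by simp)] with z hz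
  exact hz.differentiableAt (by simp)

/-- Taylor's estimate: if the derivatives of order `< n` vanish at `0`, then `f = O(|z|ⁿ)`. -/
theorem isBigO_pow_of_iteratedFDeriv_eq_zero (n : ℕ) :
    ∀ {E : Type u} [NormedAddCommGroup E] [NormedSpace ℝ E] {f : ℂ → E},
      ContDiffAt ℝ (⊤ : ℕ∞) f 0 → (∀ k < n, iteratedFDeriv ℝ k f 0 = 0) →
      f =O[𝓝 0] fun z => ‖z‖ ^ n := by
  induction n with
  | zero =>
    intro E _ _ f hf _
    simpa using hf.continuousAt.isBigO_one ℝ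
  | succ n ih =>
    intro E _ _ f hf h
    have hD := ih (contDiffAt_fderiv_top hf) fun k hk =>
      iteratedFDeriv_fderiv_eq_zero_iff.2 (h (k + 1) (by omega))
    have hf0 : f 0 = 0 := by
      have := congrArg (fun T => T ![]) (h 0 (by omega))
      simpa using this
    obtain ⟨C, hC⟩ := hD.bound
    obtain ⟨R, hR, hball⟩ := Metric.eventually_nhds_iff_ball.1
      (hC.and (eventually_differentiableAt hf))
    refine IsBigO.of_bound C ?_
    filter_upwards [Metric.ball_mem_nhds (0 : ℂ) hR] with z hz
    rw [mem_ball_zero_iff] at hz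
    have hsub : ∀ w ∈ closedBall (0 : ℂ) ‖z‖, w ∈ ball (0 : ℂ) R := fun w hw => by
      rw [mem_closedBall_zero_iff] at hw
      rw [mem_ball_zero_iff]; linarith
    have hC0 : 0 ≤ C * ‖z‖ ^ n := by
      have := (hball z (by simpa using hz)).1
      rw [norm_pow, norm_norm] at this
      exact (norm_nonneg _).trans this
    rcases eq_or_ne z 0 with rfl | hz0
    · simp [hf0]
    have hzp : 0 < ‖z‖ := norm_pos_iff.2 hz0
    have hCn : 0 ≤ C := nonneg_of_mul_nonneg_left hC0 (by positivity)
    have := (convex_closedBall (0 : ℂ) ‖z‖).norm_image_sub_le_of_norm_fderiv_le (𝕜 := ℝ)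
      (f := f) (C := C * ‖z‖ ^ n) (fun w hw => (hball w (hsub w hw)).2)
      (fun w hw => by
        have h1 := (hball w (hsub w hw)).1
        rw [norm_pow, norm_norm] at h1
        rw [mem_closedBall_zero_iff] at hw
        exact h1.trans (by gcongr))
      (mem_closedBall_self hzp.le) (y := z) (by simp)
    rw [hf0, sub_zero, sub_zero] at this
    rw [norm_pow, norm_norm, pow_succ, ← mul_assoc]
    exact this

theorem pow_isLittleO_pow {m n : ℕ} (h : m < n) :
    (fun z : ℂ => ‖z‖ ^ n) =o[𝓝 0] fun z : ℂ => ‖z‖ ^ m :=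
  (isLittleO_pow_pow (𝕜 := ℝ) h).comp_tendsto (by simpa using tendsto_norm_zero (E := ℂ))

theorem pow_isBigO_pow {m n : ℕ} (h : m ≤ n) :
    (fun z : ℂ => ‖z‖ ^ n) =O[𝓝 0] fun z : ℂ => ‖z‖ ^ m := by
  rcases h.eq_or_lt with rfl | h
  · exact isBigO_refl _ _
  · exact (pow_isLittleO_pow h).isBigO

/-- An interpolation inequality: smallness of `f` and a bound on its second derivative give
smallness of the first derivative. At `z` one compares `f` with its affine approximation on the
disc of radius `δ |z|`. -/
theorem fderiv_isLittleO_of_isLittleO {E : Type*} [NormedAddCommGroup E] [NormedSpace ℝ E]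
    {f : ℂ → E} {n : ℕ} (hf : ContDiffAt ℝ (⊤ : ℕ∞) f 0)
    (ho : f =o[𝓝 0] fun z => ‖z‖ ^ (n + 2))
    (h2 : fderiv ℝ (fderiv ℝ f) =O[𝓝 0] fun z => ‖z‖ ^ n) (h0 : fderiv ℝ f 0 = 0) :
    fderiv ℝ f =o[𝓝 0] fun z => ‖z‖ ^ (n + 1) := by
  obtain ⟨C, hCpos, hC⟩ := h2.exists_pos
  rw [isLittleO_iff]
  intro ε hε
  -- the two error terms are `C 2ⁿ δ` and `2ⁿ⁺³ η / δ`, each made at most `ε / 2`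
  obtain ⟨δ, hδ0, hδ1, hδε⟩ : ∃ δ : ℝ, 0 < δ ∧ δ ≤ 1 ∧ C * 2 ^ n * δ ≤ ε / 2 := by
    refine ⟨min 1 (ε / 2 / (C * 2 ^ n)), by positivity, min_le_left _ _, ?_⟩
    calc C * 2 ^ n * min 1 (ε / 2 / (C * 2 ^ n)) ≤ C * 2 ^ n * (ε / 2 / (C * 2 ^ n)) := by
          gcongr; exact min_le_right _ _
      _ = ε / 2 := by field_simp
  set η : ℝ := ε * δ / 2 ^ (n + 4) with hη
  have hη0 : 0 < η := by positivity
  obtain ⟨R, hR, hball⟩ := Metric.eventually_nhds_iff_ball.1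
    (((hC.bound.and (isLittleO_iff.1 ho hη0)).and (eventually_differentiableAt hf)).and
      (eventually_differentiableAt (contDiffAt_fderiv_top hf)))
  filter_upwards [Metric.ball_mem_nhds (0 : ℂ) (half_pos hR)] with z hz
  rw [mem_ball_zero_iff] at hz
  rcases eq_or_ne z 0 with rfl | hz0
  · simp [h0]
  have hzp : 0 < ‖z‖ := norm_pos_iff.2 hz0
  set s := closedBall z (δ * ‖z‖) with hs
  have hs2 : ∀ w ∈ s, ‖w‖ ≤ 2 * ‖z‖ := fun w hw => by
    rw [hs, mem_closedBall, dist_eq_norm] at hw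
    have h1 : ‖w‖ ≤ ‖w - z‖ + ‖z‖ := by simpa using norm_add_le (w - z) z
    nlinarith
  have hsub : ∀ w ∈ s, w ∈ ball (0 : ℂ) R := fun w hw => by
    rw [mem_ball_zero_iff]; linarith [hs2 w hw]
  have hzs : z ∈ s := mem_closedBall_self (by positivity)
  have hconv : Convex ℝ s := convex_closedBall _ _
  have hD : ∀ w ∈ s, ‖fderiv ℝ f w - fderiv ℝ f z‖ ≤ C * (2 * ‖z‖) ^ n * (δ * ‖z‖) := by
    intro w hw
    have := hconv.norm_image_sub_le_of_norm_fderiv_le (𝕜 := ℝ)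
      (f := fderiv ℝ f) (C := C * (2 * ‖z‖) ^ n) (fun w hw => (hball w (hsub w hw)).2)
      (fun w hw => by
        have h1 := (hball w (hsub w hw)).1.1.1
        rw [norm_pow, norm_norm] at h1
        exact h1.trans (by gcongr; exact hs2 w hw)) hzs hw
    refine this.trans ?_
    rw [hs, mem_closedBall, dist_eq_norm] at hw
    gcongr
  have hfs : ∀ w ∈ s, ‖f w‖ ≤ η * (2 * ‖z‖) ^ (n + 2) := fun w hw => by
    have h1 := (hball w (hsub w hw)).1.1.2
    rw [norm_pow, norm_norm] at h1
    exact h1.trans (by gcongr; exact hs2 w hw)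
  rw [norm_pow, norm_norm]
  refine ContinuousLinearMap.opNorm_le_bound _ (by positivity) fun v => ?_
  rcases eq_or_ne v 0 with rfl | hv0
  · simp
  have hvp : 0 < ‖v‖ := norm_pos_iff.2 hv0
  set c : ℝ := δ * ‖z‖ / ‖v‖ with hc
  have hc0 : 0 < c := by positivity
  have hcv : ‖c • v‖ = δ * ‖z‖ := by
    rw [norm_smul, Real.norm_of_nonneg hc0.le, hc]; field_simp
  have hws : z + c • v ∈ s := by
    rw [hs, mem_closedBall, dist_eq_norm, add_sub_cancel_left, hcv]
  have h3 := hconv.norm_image_sub_le_of_norm_fderiv_le' (𝕜 := ℝ) (f := f) (φ := fderiv ℝ f z)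
    (fun w hw => (hball w (hsub w hw)).1.2) hD hzs hws
  rw [add_sub_cancel_left, hcv, map_smul] at h3
  have h4 : ‖c • fderiv ℝ f z v‖ ≤
      C * (2 * ‖z‖) ^ n * (δ * ‖z‖) * (δ * ‖z‖) + 2 * (η * (2 * ‖z‖) ^ (n + 2)) := by
    have e : c • fderiv ℝ f z v =
      (f (z + c • v) - f z) - (f (z + c • v) - f z - c • fderiv ℝ f z v) := by abel
    rw [e]
    have h5 := norm_sub_le (f (z + c • v) - f z) (f (z + c • v) - f z - c • fderiv ℝ f z v)
    have h6 := norm_sub_le (f (z + c • v)) (f z)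
    linarith [hfs _ hws, hfs _ hzs]
  rw [norm_smul, Real.norm_of_nonneg hc0.le] at h4
  have h5 : C * (2 * ‖z‖) ^ n * (δ * ‖z‖) * (δ * ‖z‖) + 2 * (η * (2 * ‖z‖) ^ (n + 2)) =
      (C * 2 ^ n * δ + ε / 2) * (δ * ‖z‖ ^ (n + 2)) := by
    rw [hη]; field_simp; ring
  have h6 : (C * 2 ^ n * δ + ε / 2) * (δ * ‖z‖ ^ (n + 2)) ≤ ε * (δ * ‖z‖ ^ (n + 2)) := by
    gcongr; linarith
  have h7 : ε * (δ * ‖z‖ ^ (n + 2)) = c * (ε * ‖z‖ ^ (n + 1) * ‖v‖) := by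
    rw [hc]; field_simp; ring
  exact le_of_mul_le_mul_left (by linarith) hc0

/-- Uniqueness of Taylor expansions: a smooth function which is `o(|z|ⁿ)` has vanishing
derivatives up to order `n`. The induction passes from `f` to `fderiv ℝ f`, which is
`o(|z|ⁿ⁻¹)` by interpolation. -/
theorem iteratedFDeriv_eq_zero_of_isLittleO (n : ℕ) :
    ∀ {E : Type u} [NormedAddCommGroup E] [NormedSpace ℝ E] {f : ℂ → E},
      ContDiffAt ℝ (⊤ : ℕ∞) f 0 → (f =o[𝓝 0] fun z => ‖z‖ ^ n) →
      ∀ k ≤ n, iteratedFDeriv ℝ k f 0 = 0 := by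
  induction n with
  | zero =>
    intro E _ _ f hf ho k hk
    obtain rfl : k = 0 := by omega
    have : f 0 = 0 := by
      simp only [pow_zero] at ho
      exact tendsto_nhds_unique hf.continuousAt ((isLittleO_one_iff ℝ).1 ho)
    ext v; simpa using this
  | succ n ih =>
    intro E _ _ f hf ho k hk
    have hlow := ih hf (ho.trans_isBigO (pow_isBigO_pow n.le_succ))
    rcases Nat.eq_zero_or_pos k with rfl | hkpos
    · exact hlow 0 (by omega)
    obtain ⟨j, rfl⟩ : ∃ j, k = j + 1 := ⟨k - 1, by omega⟩
    have hf0 : f 0 = 0 := by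
      have := congrArg (fun T => T ![]) (hlow 0 (by omega))
      simpa using this
    have hD0 : fderiv ℝ f 0 = 0 := by
      refine HasFDerivAt.fderiv ?_
      rw [hasFDerivAt_iff_isLittleO_nhds_zero]
      have := ho.trans_isBigO (pow_isBigO_pow (m := 1) (by omega))
      simp only [pow_one] at this
      simpa [hf0] using isLittleO_norm_right.1 this
    refine iteratedFDeriv_fderiv_eq_zero_iff.1
      (ih (contDiffAt_fderiv_top hf) ?_ j (by omega))
    cases n with
    | zero =>
      simp only [pow_zero]
      rw [isLittleO_one_iff]
      simpa [hD0] using (contDiffAt_fderiv_top hf).continuousAt.tendsto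
    | succ n =>
      refine fderiv_isLittleO_of_isLittleO hf ho ?_ hD0
      cases n with
      | zero =>
        simpa using (contDiffAt_fderiv_top (contDiffAt_fderiv_top hf)).continuousAt.isBigO_one ℝ
      | succ n =>
        refine (isBigO_pow_of_iteratedFDeriv_eq_zero (n + 1)
          (contDiffAt_fderiv_top (contDiffAt_fderiv_top hf)) fun k hk => ?_)
        rw [iteratedFDeriv_fderiv_eq_zero_iff, iteratedFDeriv_fderiv_eq_zero_iff]
        exact hlow _ (by omega)

/-! ### Iterated Wirtinger derivatives -/

/-- The Wirtinger derivative as a continuous real-linear function of the Fréchet derivative. -/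
noncomputable def wirtingerCLM : (ℂ →L[ℝ] ℂ) →L[ℝ] ℂ :=
  ((1 / 2 : ℂ) • (ContinuousLinearMap.apply ℝ ℂ (1 : ℂ) -
    Complex.I • ContinuousLinearMap.apply ℝ ℂ Complex.I))

theorem wirtinger_eq_comp (f : ℂ → ℂ) : wirtinger f = wirtingerCLM ∘ fderiv ℝ f := by
  funext z
  simp [wirtinger, wirtingerCLM]

theorem contDiff_wirtinger {f : ℂ → ℂ} (hf : ContDiff ℝ (⊤ : ℕ∞) f) :
    ContDiff ℝ (⊤ : ℕ∞) (wirtinger f) := by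
  rw [wirtinger_eq_comp]
  exact wirtingerCLM.contDiff.comp (hf.fderiv_right (by simp))

theorem contDiff_wirtingerIter {f : ℂ → ℂ} (hf : ContDiff ℝ (⊤ : ℕ∞) f) (n : ℕ) :
    ContDiff ℝ (⊤ : ℕ∞) (wirtingerIter n f) := by
  induction n with
  | zero => exact hf
  | succ n ih => exact contDiff_wirtinger ih

theorem wirtingerIter_add {f g : ℂ → ℂ} (hf : ContDiff ℝ (⊤ : ℕ∞) f)
    (hg : ContDiff ℝ (⊤ : ℕ∞) g) (n : ℕ) :
    wirtingerIter n (fun z => f z + g z) =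
      fun z => wirtingerIter n f z + wirtingerIter n g z := by
  induction n with
  | zero => rfl
  | succ n ih =>
    funext z
    have h1 := (contDiff_wirtingerIter hf n).differentiable (by simp) z
    have h2 := (contDiff_wirtingerIter hg n).differentiable (by simp) z
    simp only [wirtingerIter, ih]
    simp only [wirtinger, fderiv_fun_add h1 h2, add_apply]
    ring

theorem iteratedFDeriv_wirtinger_eq_zero {f : ℂ → ℂ} (hf : ContDiff ℝ (⊤ : ℕ∞) f) {k : ℕ}
    (h : iteratedFDeriv ℝ (k + 1) f 0 = 0) : iteratedFDeriv ℝ k (wirtinger f) 0 = 0 := by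
  have hD : ContDiff ℝ (⊤ : ℕ∞) (fderiv ℝ f) := hf.fderiv_right (by simp)
  rw [wirtinger_eq_comp, wirtingerCLM.iteratedFDeriv_comp_left hD.contDiffAt
    (by exact_mod_cast le_top), iteratedFDeriv_fderiv_eq_zero_iff.2 h]
  ext v
  simp

theorem wirtingerIter_eq_zero_of_iteratedFDeriv {f : ℂ → ℂ} (hf : ContDiff ℝ (⊤ : ℕ∞) f) {m : ℕ}
    (h : ∀ k ≤ m, iteratedFDeriv ℝ k f 0 = 0) : wirtingerIter m f 0 = 0 := by
  have key : ∀ n k, n + k ≤ m → iteratedFDeriv ℝ k (wirtingerIter n f) 0 = 0 := by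
    intro n
    induction n with
    | zero => exact fun k hk => h k (by omega)
    | succ n ih =>
      exact fun k hk => iteratedFDeriv_wirtinger_eq_zero (contDiff_wirtingerIter hf n)
        (ih (k + 1) (by omega))
  have := congrArg (fun T => T ![]) (key m 0 (by omega))
  simpa using this

theorem wirtinger_const_mul_pow (c : ℂ) (k : ℕ) (z : ℂ) :
    wirtinger (fun z => c * z ^ k) z = c * k * z ^ (k - 1) := by
  have h : HasDerivAt (fun z : ℂ => c * z ^ k) (c * (k * z ^ (k - 1))) z :=
    (hasDerivAt_pow k z).const_mul c
  have h' := h.hasFDerivAt.restrictScalars ℝ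
  rw [wirtinger, h'.fderiv]
  simp
  linear_combination (-(1 / 2) * (c * k * z ^ (k - 1))) * Complex.I_mul_I

theorem wirtingerIter_const_mul_pow (c : ℂ) (m n : ℕ) :
    wirtingerIter n (fun z => c * z ^ m) = fun z => c * m.descFactorial n * z ^ (m - n) := by
  induction n with
  | zero => simp [wirtingerIter]
  | succ n ih =>
    funext z
    rw [wirtingerIter, ih, wirtinger_const_mul_pow, Nat.descFactorial_succ, Nat.sub_sub]
    push_cast
    ring

theorem wirtingerIter_conj_pow (c : ℂ) (m n : ℕ) :
    wirtingerIter (n + 1) (fun z => c * (starRingEnd ℂ z) ^ m) = fun _ => 0 := by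
  induction n with
  | zero =>
    funext z
    have h : HasDerivAt (fun z : ℂ => c * z ^ m) (c * (m * (starRingEnd ℂ z) ^ (m - 1)))
      (starRingEnd ℂ z) := (hasDerivAt_pow m _).const_mul c
    have h' := (h.hasFDerivAt.restrictScalars ℝ).comp z
      (Complex.conjCLE.toContinuousLinearMap.hasFDerivAt (x := z))
    have h'' : fderiv ℝ (fun z => c * (starRingEnd ℂ z) ^ m) z = _ := h'.fderiv
    simp only [wirtingerIter, wirtinger, h'']
    simp
    linear_combination ((c * m * (starRingEnd ℂ z) ^ (m - 1))) * Complex.I_mul_I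
  | succ n ih =>
    funext z
    rw [wirtingerIter, ih]
    simp [wirtinger]

theorem wirtingerIter_re_pow (γ : ℂ) {m : ℕ} (hm : m ≠ 0) :
    wirtingerIter m (fun z => (((γ * z ^ m).re : ℝ) : ℂ)) 0 = γ / 2 * m.factorial := by
  have e : (fun z : ℂ => (((γ * z ^ m).re : ℝ) : ℂ)) = fun z =>
      γ / 2 * z ^ m + (starRingEnd ℂ γ) / 2 * (starRingEnd ℂ z) ^ m := by
    funext z
    rw [Complex.re_eq_add_conj, map_mul, map_pow]
    ring
  have hc : ContDiff ℝ (⊤ : ℕ∞) (fun z : ℂ => starRingEnd ℂ z) := Complex.conjCLE.contDiff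
  rw [e, wirtingerIter_add (f := fun z => γ / 2 * z ^ m)
    (g := fun z => (starRingEnd ℂ γ) / 2 * (starRingEnd ℂ z) ^ m)
    (contDiff_const.mul (contDiff_id.pow m)) (contDiff_const.mul (hc.pow m))]
  obtain ⟨n, rfl⟩ := Nat.exists_eq_succ_of_ne_zero hm
  rw [wirtingerIter_const_mul_pow, wirtingerIter_conj_pow]
  simp [-Nat.descFactorial_succ, Nat.descFactorial_self (n + 1)]

/-- If `P` agrees with the harmonic monomial `-Re (γ zᵐ)` up to `o(|z|ᵐ)`, then `γ` is determined
by `∂ᵐP/∂zᵐ (0)`; when the latter vanishes, so do all derivatives of `P` up to order `m`. -/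
theorem iteratedFDeriv_eq_zero_of_harmonic_approx {P : ℂ → ℝ} (hP : ContDiff ℝ (⊤ : ℕ∞) P)
    {m : ℕ} (hm : m ≠ 0) (hharm : wirtingerIter m (fun z => (P z : ℂ)) 0 = 0) (γ : ℂ)
    (ho : (fun z => P z + (γ * z ^ m).re) =o[𝓝 0] fun z => ‖z‖ ^ m) :
    ∀ k ≤ m, iteratedFDeriv ℝ k P 0 = 0 := by
  have hPc : ContDiff ℝ (⊤ : ℕ∞) (fun z => (P z : ℂ)) := Complex.ofRealCLM.contDiff.comp hP
  have hmon : ContDiff ℝ (⊤ : ℕ∞) (fun z : ℂ => (((γ * z ^ m).re : ℝ) : ℂ)) :=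
    Complex.ofRealCLM.contDiff.comp
      (Complex.reCLM.contDiff.comp (contDiff_const.mul (contDiff_id.pow m)))
  have hγ : γ = 0 := by
    have ho' : (fun z => (P z : ℂ) + (((γ * z ^ m).re : ℝ) : ℂ)) =o[𝓝 0] fun z => ‖z‖ ^ m := by
      rw [← isLittleO_norm_left] at ho ⊢
      refine ho.congr_left fun z => ?_
      rw [← Complex.ofReal_add, Complex.norm_real]
    have h0 := wirtingerIter_eq_zero_of_iteratedFDeriv (hPc.add hmon)
      (iteratedFDeriv_eq_zero_of_isLittleO m (hPc.add hmon).contDiffAt ho')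
    rw [wirtingerIter_add hPc hmon] at h0
    simp only [hharm, wirtingerIter_re_pow γ hm, zero_add] at h0
    have hfac : (m.factorial : ℂ) ≠ 0 := by exact_mod_cast m.factorial_ne_zero
    simpa [hfac] using h0
  refine iteratedFDeriv_eq_zero_of_isLittleO m hP.contDiffAt ?_
  simpa [hγ] using ho

/-! ### Vanishing orders and holomorphic germs -/

theorem iteratedFDeriv_eq_zero_of_lt_vanishOrder {E : Type*} [NormedAddCommGroup E]
    [NormedSpace ℝ E] {f : ℂ → E} {n : ℕ} (h : (n : ℕ∞) < vanishOrder f) :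
    iteratedFDeriv ℝ n f 0 = 0 := by
  by_contra hne
  exact absurd (sInf_le (show (n : ℕ∞) ∈ {m : ℕ∞ | ∃ n : ℕ, m = (n : ℕ∞) ∧
    iteratedFDeriv ℝ n f 0 ≠ 0} from ⟨n, rfl, hne⟩)) (not_le.2 h)

theorem exists_vanishOrder_eq {E : Type*} [NormedAddCommGroup E]
    [NormedSpace ℝ E] {f : ℂ → E} (h : vanishOrder f ≠ ⊤) :
    ∃ k : ℕ, vanishOrder f = k ∧ iteratedFDeriv ℝ k f 0 ≠ 0 := by
  have hne : {m : ℕ∞ | ∃ n : ℕ, m = (n : ℕ∞) ∧ iteratedFDeriv ℝ n f 0 ≠ 0}.Nonempty := by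
    rw [Set.nonempty_iff_ne_empty]
    intro he
    exact h (by rw [vanishOrder, he, sInf_empty])
  exact csInf_mem hne

theorem exists_pow_mul_of_le_order {u : ℂ → ℂ} (hu : AnalyticAt ℂ u 0) {n : ℕ}
    (h : (n : ℕ∞) ≤ analyticOrderAt u 0) :
    ∃ g : ℂ → ℂ, AnalyticAt ℂ g 0 ∧ ∀ᶠ t in 𝓝 0, u t = t ^ n * g t := by
  obtain ⟨g, hg, he⟩ := (natCast_le_analyticOrderAt hu).1 h
  exact ⟨g, hg, by simpa using he⟩

theorem isBigO_pow_of_le_order {u : ℂ → ℂ} (hu : AnalyticAt ℂ u 0) {n : ℕ}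
    (h : (n : ℕ∞) ≤ analyticOrderAt u 0) : u =O[𝓝 0] fun t => ‖t‖ ^ n := by
  obtain ⟨g, hg, he⟩ := exists_pow_mul_of_le_order hu h
  refine EventuallyEq.trans_isBigO he ?_
  have h1 : (fun t : ℂ => t ^ n) =O[𝓝 0] fun t => ‖t‖ ^ n := by
    refine IsBigO.of_norm_left ?_
    simpa using isBigO_refl (fun t : ℂ => ‖t‖ ^ n) (𝓝 0)
  simpa using h1.mul (hg.continuousAt.isBigO_one ℝ)

theorem pow_isBigO_of_order_eq {u : ℂ → ℂ} (hu : AnalyticAt ℂ u 0) {n : ℕ}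
    (h : analyticOrderAt u 0 = n) : (fun t : ℂ => ‖t‖ ^ n) =O[𝓝 0] u := by
  obtain ⟨g, hg, hg0, he⟩ := hu.analyticOrderAt_eq_natCast.1 h
  have h1 : (fun _ : ℂ => (1 : ℝ)) =O[𝓝 0] g := by
    have hpos : 0 < ‖g 0‖ := norm_pos_iff.2 hg0
    refine IsBigO.of_bound (2 / ‖g 0‖) ?_
    filter_upwards [hg.continuousAt.norm.eventually (lt_mem_nhds (half_lt_self hpos))] with t ht
    rw [norm_one, div_mul_eq_mul_div, le_div_iff₀ hpos]
    linarith
  have h2 : (fun t : ℂ => ‖t‖ ^ n) =O[𝓝 0] fun t => t ^ n := by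
    refine IsBigO.of_norm_right ?_
    simpa using isBigO_refl (fun t : ℂ => ‖t‖ ^ n) (𝓝 0)
  have h3 := h2.mul h1
  simp only [mul_one] at h3
  refine h3.trans_eventuallyEq ?_
  filter_upwards [he] with t ht
  simp [ht]

/-- Local openness of a nonconstant holomorphic germ: a property holding at `u t` for all small
`t` holds at all small points. -/
theorem nhds_le_map_of_order {u : ℂ → ℂ} (hu : AnalyticAt ℂ u 0) (hu0 : u 0 = 0)
    (h : analyticOrderAt u 0 ≠ ⊤) : 𝓝 (0 : ℂ) ≤ map u (𝓝 0) := by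
  have := hu.eventually_constant_or_nhds_le_map_nhds
  rw [hu0] at this
  exact this.resolve_left fun hc => h (analyticOrderAt_eq_top.2 hc)

/-- `Re u = o(u)` fails for a nonconstant holomorphic germ vanishing at `0`. -/
theorem not_re_isLittleO {u : ℂ → ℂ} (hu : AnalyticAt ℂ u 0) (hu0 : u 0 = 0)
    (h : analyticOrderAt u 0 ≠ ⊤) : ¬ (fun t => (u t).re) =o[𝓝 0] u := by
  intro ho
  have h1 : (fun w : ℂ => w.re) =o[𝓝 0] fun w : ℂ => w :=
    (isLittleO_map.2 ho).mono (nhds_le_map_of_order hu hu0 h)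
  have h2 : (fun x : ℝ => x) =o[𝓝 0] fun x : ℝ => x := by
    have h3 := h1.comp_tendsto (k := fun x : ℝ => (x : ℂ)) (l' := 𝓝 0)
      (by simpa using Complex.continuous_ofReal.tendsto 0)
    rw [← isLittleO_norm_right] at h3 ⊢
    simpa [Function.comp_def] using h3
  obtain ⟨R, hR, hb⟩ := Metric.eventually_nhds_iff_ball.1
    (isLittleO_iff.1 h2 (c := 1 / 2) (by norm_num))
  have := hb (R / 2) (by simp [abs_of_pos hR]; linarith)
  rw [Real.norm_of_nonneg (by positivity)] at this
  linarith

/-! ### The two implications -/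

/-- If `P` vanishes to finite order `m`, then `ν(ρ ∘ h) ≤ m ν(h)` for every disc `h` with `ν(h)`
finite, so infinite type fails at `ℓ = m`. -/
theorem not_isInfiniteType (P : ℂ → ℝ) (Q : ℂ × ℝ → ℝ)
    (hPsm : ContDiff ℝ (⊤ : ℕ∞) P) (hQsm : ContDiff ℝ (⊤ : ℕ∞) Q)
    (hP0 : P 0 = 0) (hQ0 : Q (0, 0) = 0)
    (hharm : ∀ N : ℕ, wirtingerIter N (fun z => (P z : ℂ)) 0 = 0)
    (hne : ∃ n : ℕ, iteratedFDeriv ℝ n P 0 ≠ 0) :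
    ¬ IsInfiniteType (fun z : ℂ × ℂ => z.1.re + P z.2 + z.1.im * Q (z.2, z.1.im)) := by
  classical
  intro hI
  -- `m` is the vanishing order of `P`
  obtain ⟨m, hmne, hmlow⟩ : ∃ m, iteratedFDeriv ℝ m P 0 ≠ 0 ∧
      ∀ k < m, iteratedFDeriv ℝ k P 0 = 0 :=
    ⟨Nat.find hne, Nat.find_spec hne, fun k hk => not_not.1 (Nat.find_min hne hk)⟩
  have hm : m ≠ 0 := by
    rintro rfl
    exact hmne (by ext v; simpa using hP0)
  obtain ⟨h, hd, h0, hfin, hlt⟩ := hI m (Nat.pos_of_ne_zero hm)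
  obtain ⟨k, hk, hkne⟩ := exists_vanishOrder_eq hfin
  have hA : AnalyticAt ℂ h 0 := hd.analyticAt (ball_mem_nhds _ one_pos)
  have hAR : ContDiffAt ℝ (⊤ : ℕ∞) h 0 := hA.restrictScalars.contDiffAt
  set u : ℂ → ℂ := fun t => (h t).1 with hu
  set v : ℂ → ℂ := fun t => (h t).2 with hv
  have hAu : AnalyticAt ℂ u 0 := analyticAt_fst.fun_comp hA
  have hAv : AnalyticAt ℂ v 0 := analyticAt_snd.fun_comp hA
  have hu0 : u 0 = 0 := by simp [hu, h0]
  have hv0 : v 0 = 0 := by simp [hv, h0]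
  have hcu : ContDiffAt ℝ (⊤ : ℕ∞) u 0 := hAu.restrictScalars.contDiffAt
  have hcv : ContDiffAt ℝ (⊤ : ℕ∞) v 0 := hAv.restrictScalars.contDiffAt
  have hre : ContDiffAt ℝ (⊤ : ℕ∞) (fun t => (u t).re) 0 :=
    Complex.reCLM.contDiff.contDiffAt.comp 0 hcu
  have him : ContDiffAt ℝ (⊤ : ℕ∞) (fun t => (u t).im) 0 :=
    Complex.imCLM.contDiff.contDiffAt.comp 0 hcu
  have hQc : ContDiffAt ℝ (⊤ : ℕ∞) (fun t => Q (v t, (u t).im)) 0 :=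
    hQsm.contDiffAt.comp (0 : ℂ) (hcv.prodMk him)
  have hPc : ContDiffAt ℝ (⊤ : ℕ∞) (fun t => P (v t)) 0 := hPsm.contDiffAt.comp 0 hcv
  have hF : (fun t => (u t).re + P (v t) + (u t).im * Q (v t, (u t).im)) =o[𝓝 0]
      fun t => ‖t‖ ^ (m * k) := by
    refine (isBigO_pow_of_iteratedFDeriv_eq_zero (m * k + 1)
      ((hre.add hPc).add (him.mul hQc)) fun j hj => ?_).trans_isLittleO
        (pow_isLittleO_pow (Nat.lt_succ_self _))
    refine iteratedFDeriv_eq_zero_of_lt_vanishOrder (lt_of_le_of_lt ?_ hlt)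
    rw [hk]
    exact_mod_cast Nat.lt_succ_iff.1 hj
  have hmin : analyticOrderAt u 0 ≤ k ∨ analyticOrderAt v 0 ≤ k := by
    by_contra! hcon
    have hub := isBigO_pow_of_le_order (n := k + 1) hAu
      (by push_cast; exact Order.add_one_le_of_lt hcon.1)
    have hvb := isBigO_pow_of_le_order (n := k + 1) hAv
      (by push_cast; exact Order.add_one_le_of_lt hcon.2)
    exact hkne (iteratedFDeriv_eq_zero_of_isLittleO k hAR
      ((hub.prod_left hvb).trans_isLittleO (pow_isLittleO_pow k.lt_succ_self)) k le_rfl)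
  -- the term involving `Q` is negligible with respect to `u`
  have hQo : (fun t => (u t).im * Q (v t, (u t).im)) =o[𝓝 0] u := by
    have h1 : (fun t => (u t).im) =O[𝓝 0] u :=
      IsBigO.of_bound 1 (Eventually.of_forall fun t => by
        simpa using Complex.abs_im_le_norm (u t))
    have h2 : (fun t => Q (v t, (u t).im)) =o[𝓝 0] fun _ => (1 : ℝ) := by
      rw [isLittleO_one_iff]
      simpa [hu0, hv0, hQ0] using hQc.continuousAt.tendsto
    simpa using h1.norm_right.mul_isLittleO h2
  have hPO : P =O[𝓝 0] fun z => ‖z‖ ^ m :=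
    isBigO_pow_of_iteratedFDeriv_eq_zero m hPsm.contDiffAt hmlow
  have hvt : Tendsto v (𝓝 0) (𝓝 0) := by simpa [hv0] using hAv.continuousAt.tendsto
  have hPv : (fun t => P (v t)) =O[𝓝 0] fun t => ‖v t‖ ^ m := hPO.comp_tendsto hvt
  have hPvb : ∀ b : ℕ, (b : ℕ∞) ≤ analyticOrderAt v 0 →
      (fun t => P (v t)) =O[𝓝 0] fun t => ‖t‖ ^ (m * b) := fun b hb => by
    refine hPv.trans ?_
    have := ((isBigO_pow_of_le_order hAv hb).norm_left).pow m
    simpa [← pow_mul, mul_comm] using this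
  have hmk : k ≤ m * k := Nat.le_mul_of_pos_left k (Nat.pos_of_ne_zero hm)
  by_cases hcase : ∃ b : ℕ, (b : ℕ∞) ≤ analyticOrderAt v 0 ∧ analyticOrderAt u 0 < (m * b : ℕ)
  · -- `Re u` dominates the other two terms
    obtain ⟨b, hb, hab⟩ := hcase
    obtain ⟨a, ha⟩ := ENat.ne_top_iff_exists.1 (ne_top_of_lt hab)
    rw [← ha] at hab
    have hab' : a < m * b := by exact_mod_cast hab
    have hamk : a ≤ m * k := by
      rcases hmin with h1 | h1
      · rw [← ha] at h1
        exact le_trans (by exact_mod_cast h1) hmk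
      · have : b ≤ k := by exact_mod_cast hb.trans h1
        exact hab'.le.trans (by gcongr)
    have hta : (fun t : ℂ => ‖t‖ ^ a) =O[𝓝 0] u := pow_isBigO_of_order_eq hAu ha.symm
    have h1 := hF.trans_isBigO ((pow_isBigO_pow hamk).trans hta)
    have h2 := (hPvb b hb).trans_isLittleO ((pow_isLittleO_pow hab').trans_isBigO hta)
    refine not_re_isLittleO hAu hu0 (ha ▸ ENat.natCast_ne_top a) ?_
    refine ((h1.sub h2).sub hQo).congr_left fun t => ?_
    ring
  · -- `u` vanishes to order at least `m` times the order of `v`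
    push Not at hcase
    have hvle : analyticOrderAt v 0 ≤ k := by
      rcases hmin with h1 | h1
      · by_contra! h2
        have h3 := hcase (k + 1) (by push_cast; exact Order.add_one_le_of_lt h2)
        have h4 : m * (k + 1) ≤ k := by exact_mod_cast h3.trans h1
        nlinarith [Nat.pos_of_ne_zero hm]
      · exact h1
    obtain ⟨b, hb⟩ := ENat.ne_top_iff_exists.1
      (ne_top_of_le_ne_top (ENat.natCast_ne_top k) hvle)
    have hbk : b ≤ k := by rw [← hb] at hvle; exact_mod_cast hvle
    have hua := hcase b hb.le
    obtain ⟨G, hG, hGe⟩ := exists_pow_mul_of_le_order hAu hua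
    obtain ⟨H, hH, hH0, hHe⟩ := hAv.analyticOrderAt_eq_natCast.1 hb.symm
    set γ : ℂ := G 0 / H 0 ^ m with hγ
    have htb : (fun t : ℂ => ‖t‖ ^ (m * b)) =O[𝓝 0] fun t => ‖v t‖ ^ m := by
      have := (pow_isBigO_of_order_eq hAv hb.symm).norm_right.pow m
      simpa [← pow_mul, mul_comm] using this
    -- `γ` is the ratio of the leading coefficients of `u` and `v ^ m`
    have hdiff : (fun t => γ * v t ^ m - u t) =o[𝓝 0] fun t => ‖t‖ ^ (m * b) := by
      have h1 : (fun t => γ * H t ^ m - G t) =o[𝓝 0] fun _ => (1 : ℝ) := by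
        rw [isLittleO_one_iff]
        have : ContinuousAt (fun t => γ * H t ^ m - G t) 0 :=
          (continuousAt_const.mul (hH.continuousAt.pow m)).sub hG.continuousAt
        have e : γ * H 0 ^ m - G 0 = 0 := by
          rw [hγ, div_mul_cancel₀ _ (pow_ne_zero m hH0), sub_self]
        simpa [e] using this.tendsto
      have h2 : (fun t : ℂ => t ^ (m * b)) =O[𝓝 0] fun t => ‖t‖ ^ (m * b) := by
        refine IsBigO.of_norm_left ?_
        simpa using isBigO_refl (fun t : ℂ => ‖t‖ ^ (m * b)) (𝓝 0)
      have h3 := h2.mul_isLittleO h1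
      simp only [mul_one] at h3
      refine EventuallyEq.trans_isLittleO ?_ h3
      filter_upwards [hGe, hHe] with t hG1 hH1
      rw [hG1, hH1, sub_zero, smul_eq_mul, mul_pow, ← pow_mul, mul_comm b m]
      ring
    have hdre : (fun t => (γ * v t ^ m - u t).re) =o[𝓝 0] fun t => ‖t‖ ^ (m * b) :=
      (IsBigO.of_norm_le fun t => Complex.abs_re_le_norm _).trans_isLittleO hdiff.norm_left
    have h1 := hF.trans_isBigO (pow_isBigO_pow (Nat.mul_le_mul_left m hbk))
    have h2 := hQo.trans_isBigO (isBigO_pow_of_le_order hAu hua)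
    have h3 : (fun t => P (v t) + (γ * v t ^ m).re) =o[𝓝 0] fun t => ‖v t‖ ^ m := by
      refine (((h1.sub h2).add hdre).congr_left fun t => ?_).trans_isBigO htb
      rw [Complex.sub_re]
      ring
    have h4 : (fun z => P z + (γ * z ^ m).re) =o[𝓝 0] fun z => ‖z‖ ^ m :=
      (isLittleO_map (k := v).2 h3).mono
        (nhds_le_map_of_order hAv hv0 (hb ▸ ENat.natCast_ne_top b))
    exact hmne (iteratedFDeriv_eq_zero_of_harmonic_approx hPsm hm (hharm m) γ h4 m le_rfl)

/-- If `P` is flat at `0`, the complex line `t ↦ (0, t)` has infinite order of contact. -/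
theorem isInfiniteType_of_flat (P : ℂ → ℝ) (Q : ℂ × ℝ → ℝ)
    (hflat : ∀ n : ℕ, iteratedFDeriv ℝ n P 0 = 0) :
    IsInfiniteType (fun z : ℂ × ℂ => z.1.re + P z.2 + z.1.im * Q (z.2, z.1.im)) := by
  intro ℓ _
  refine ⟨fun t => (0, t), by fun_prop, rfl, ?_, ?_⟩
  all_goals
    have hone : vanishOrder (fun t : ℂ => ((0 : ℂ), t)) ≤ (1 : ℕ) := by
      refine sInf_le ⟨1, rfl, fun h => ?_⟩
      have h1 : HasFDerivAt (fun t : ℂ => ((0 : ℂ), t)) (ContinuousLinearMap.inr ℝ ℂ ℂ) 0 :=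
        (ContinuousLinearMap.inr ℝ ℂ ℂ).hasFDerivAt
      have h2 := congrArg (fun T => T ![1]) h
      simp [iteratedFDeriv_one_apply, h1.fderiv] at h2
  · exact ne_top_of_le_ne_top (ENat.natCast_ne_top 1) hone
  · have htop : vanishOrder (fun t : ℂ => (0 : ℂ).re + P t + (0 : ℂ).im * Q (t, (0 : ℂ).im)) = ⊤ := by
      simp only [Complex.zero_re, Complex.zero_im, zero_mul, zero_add, add_zero]
      rw [vanishOrder, sInf_eq_top]
      rintro _ ⟨n, rfl, hn⟩
      exact absurd (hflat n) hn
    refine lt_of_le_of_lt (mul_le_mul_right hone _) ?_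
    refine lt_of_lt_of_eq ?_ htop.symm
    exact_mod_cast ENat.natCast_lt_top (ℓ * 1)

/-- **Theorem 2 (Kim–Ninh).** Let M be the smooth real hypersurface germ at 0 in ℂ² defined by
ρ(z₁,z₂) = Re z₁ + P(z₂) + (Im z₁) Q(z₂, Im z₁) = 0, where P, Q are C^∞ with P(0)=0, dP(0)=0,
Q(0,0)=0, and all iterated Wirtinger derivatives ∂^N P/∂z₂^N vanish at 0. Then 0 is a point of
infinite type if and only if P vanishes to infinite order at 0. -/
theorem statement0 (P : ℂ → ℝ) (Q : ℂ × ℝ → ℝ)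
    (hPsm : ContDiff ℝ (⊤ : ℕ∞) P) (hQsm : ContDiff ℝ (⊤ : ℕ∞) Q)
    (hP0 : P 0 = 0) (hdP0 : fderiv ℝ P 0 = 0) (hQ0 : Q (0, 0) = 0)
    (hharm : ∀ N : ℕ, wirtingerIter N (fun z => (P z : ℂ)) 0 = 0) :
    IsInfiniteType (fun z : ℂ × ℂ => z.1.re + P z.2 + z.1.im * Q (z.2, z.1.im)) ↔
      (∀ n : ℕ, iteratedFDeriv ℝ n P 0 = 0) := by
  constructor
  · intro hI
    by_contra! hne
    exact not_isInfiniteType P Q hPsm hQsm hP0 hQ0 hharm hne hI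
  · exact isInfiniteType_of_flat P Q
end

section
/- There exists a C^∞-smooth real hypersurface germ M = {(z₁,z₂) ∈ ℂ² : ρ(z₁,z₂) = Re z₁ + f(z₂) = 0} at the origin in ℂ², with f: ℂ → ℝ a C^∞-smooth function with f(0)=0, such that the D'Angelo type τ(M,0) = +∞, and yet there exists NO regular holomorphic curve with infinite order contact with M at 0; that is, there is no function h holomorphic in a neighborhood of 0 in ℂ with h(0)=0 such that the curve φ(t) = (h(t), t) satisfies ν(ρ∘φ) = +∞. -/
/-!
The function `f` is chosen so that its Taylor series at `0` is the real part of the divergent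
power series `∑ n · n! zⁿ`; it is produced by Borel's construction, as a sum of terms
`n · n! Re zⁿ`, each cut off on a small enough disc (`exists_cutoff`, `exists_borel`).

* Infinite type: the disc `t ↦ (-∑_{n ≤ ℓ} n · n! tⁿ, t)` has vanishing order at most one, while
  the composition with `ρ` vanishes to order at least `ℓ + 1`, because it removes the Taylor
  polynomial of `f` of degree `ℓ`.
* No curve `(h(t), t)` has infinite order of contact: comparing Taylor series, the power series of
  `Re h` along the real axis would have coefficients `-n · n!`, but a convergent power series has
  coefficients of at most geometric growth (`not_analytic_of_factorial`).
-/

open Complex Metric Filter Topology Asymptotics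

/-- The homogeneous real polynomial `Re zⁿ` on `ℂ`. -/
noncomputable def rePow (n : ℕ) (z : ℂ) : ℝ := (z ^ n).re

lemma contDiff_rePow (n : ℕ) {N : WithTop ℕ∞} : ContDiff ℝ N (rePow n) :=
  Complex.reCLM.contDiff.comp (contDiff_id.pow n)

/-- By homogeneity, the only nonzero derivative of `Re zⁿ` at `0` is the `n`-th one. -/
lemma iteratedFDeriv_rePow_of_ne {m n : ℕ} (hmn : m ≠ n) :
    iteratedFDeriv ℝ m (rePow n) 0 = 0 := by
  -- Compare the two ways of scaling the argument by the factor `2`.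
  have h1 : (fun z : ℂ => rePow n ((2 : ℝ) • z)) = (2 : ℝ) ^ n • rePow n := by
    funext z
    simp only [rePow, Pi.smul_apply, smul_pow, Complex.smul_re]
  have h2 := congrFun (iteratedFDeriv_comp_const_smul (𝕜 := ℝ) (i := m) (2 : ℝ)
    (contDiff_rePow n)) 0
  rw [h1, iteratedFDeriv_const_smul_apply (contDiff_rePow n).contDiffAt] at h2
  simp only [smul_zero] at h2
  rw [← sub_eq_zero, ← sub_smul, smul_eq_zero] at h2
  refine h2.resolve_left fun h => hmn ?_
  exact (pow_right_injective₀ (by norm_num : (0 : ℝ) < 2) (by norm_num) (sub_eq_zero.1 h)).symm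

lemma iteratedFDeriv_rePow_self_one (n : ℕ) :
    iteratedFDeriv ℝ n (rePow n) 0 (fun _ => 1) = (n.factorial : ℝ) := by
  have h := Complex.ofRealCLM.iteratedFDeriv_comp_right (contDiff_rePow n (N := n)) 0 le_rfl
  have h1 : rePow n ∘ Complex.ofRealCLM = fun x : ℝ => x ^ n := by
    funext x
    simp [rePow, ← Complex.ofReal_pow]
  rw [h1] at h
  have h2 := congrArg (fun L => L (fun _ => (1 : ℝ))) h
  simp only [ContinuousMultilinearMap.compContinuousLinearMap_apply] at h2
  rw [← iteratedDeriv_eq_iteratedFDeriv, iteratedDeriv_fun_pow_zero] at h2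
  simpa using h2.symm

/-- One term of Borel's construction: a smooth function which equals `a Re zⁿ` near `0`, has
bounded derivatives of all orders, and has derivatives of order less than `n` bounded by `2⁻ⁿ`.
It is `a Re zⁿ χ(λ z)` for a bump function `χ` and a large dilation factor `λ`. -/
lemma exists_cutoff (a : ℝ) (n : ℕ) : ∃ g : ℂ → ℝ, ContDiff ℝ (⊤ : ℕ∞) g ∧
    (g =ᶠ[𝓝 0] a • rePow n) ∧
    (∀ k : ℕ, ∃ C : ℝ, ∀ x, ‖iteratedFDeriv ℝ k g x‖ ≤ C) ∧
    ∀ k < n, ∀ x, ‖iteratedFDeriv ℝ k g x‖ ≤ (1 / 2 : ℝ) ^ n := by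
  let χ : ContDiffBump (0 : ℂ) := default
  let q : ℂ → ℝ := fun z => χ z * rePow n z
  have hq {N : ℕ∞} : ContDiff ℝ N q := χ.contDiff.mul (contDiff_rePow n)
  have hqs : HasCompactSupport q := χ.hasCompactSupport.mul_right
  have hb : ∀ k : ℕ, ∃ C : ℝ, ∀ x, ‖iteratedFDeriv ℝ k q x‖ ≤ C := fun k =>
    ((hq (N := k)).continuous_iteratedFDeriv le_rfl).bounded_above_of_compact_support
      (hqs.iteratedFDeriv k)
  choose C hC using hb
  have hC0 : ∀ k, 0 ≤ C k := fun k => (norm_nonneg _).trans (hC k 0)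
  have hS : 0 ≤ ∑ k ∈ Finset.range n, C k := Finset.sum_nonneg fun k _ => hC0 k
  let L : ℝ := 1 + 2 ^ n * (|a| * ∑ k ∈ Finset.range n, C k)
  have hL1 : 1 ≤ L := le_add_of_nonneg_right (by positivity)
  have hL0 : 0 < L := by linarith
  let g : ℂ → ℝ := (a * (L ^ n)⁻¹) • fun z => q (L • z)
  have hqL {N : ℕ∞} : ContDiff ℝ N (fun z => q (L • z)) := hq.comp (contDiff_const_smul L)
  have hD : ∀ (k : ℕ) (x : ℂ), ‖iteratedFDeriv ℝ k g x‖ ≤ |a| * (L ^ n)⁻¹ * (L ^ k * C k) := by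
    intro k x
    rw [iteratedFDeriv_const_smul_apply (hqL (N := k)).contDiffAt,
      iteratedFDeriv_comp_const_smul L (hq (N := k)), norm_smul, norm_smul, norm_mul, norm_inv,
      norm_pow, norm_pow, Real.norm_eq_abs, Real.norm_eq_abs, abs_of_pos hL0]
    gcongr
    exact hC k _
  refine ⟨g, contDiff_const.smul hqL, ?_, fun k => ⟨_, hD k⟩, ?_⟩
  · have h1 : Tendsto (fun z : ℂ => L • z) (𝓝 0) (𝓝 0) := by
      have : Continuous (fun z : ℂ => L • z) := continuous_const_smul L
      simpa using this.tendsto 0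
    filter_upwards [h1.eventually χ.eventuallyEq_one] with z hz
    have hz' : χ (L • z) = 1 := hz
    have hpow : rePow n (L • z) = L ^ n * rePow n z := by
      simp only [rePow, smul_pow, Complex.smul_re, smul_eq_mul]
    simp only [g, q, Pi.smul_apply, smul_eq_mul, hz', hpow]
    field_simp
  · intro k hk x
    refine (hD k x).trans ?_
    have hCk : C k ≤ ∑ k ∈ Finset.range n, C k :=
      Finset.single_le_sum (fun k _ => hC0 k) (Finset.mem_range.2 hk)
    have hpow : L ^ k * L ≤ L ^ n := by
      rw [← pow_succ]
      exact pow_le_pow_right₀ hL1 hk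
    have hmain : |a| * C k * 2 ^ n ≤ L := by
      have : |a| * C k * 2 ^ n ≤ |a| * (∑ k ∈ Finset.range n, C k) * 2 ^ n := by gcongr
      simp only [L]
      linarith
    have hLn : 0 < L ^ n := by positivity
    rw [one_div_pow, le_div_iff₀ (by positivity)]
    calc |a| * (L ^ n)⁻¹ * (L ^ k * C k) * 2 ^ n
        = (L ^ n)⁻¹ * (L ^ k * (|a| * C k * 2 ^ n)) := by ring
      _ ≤ (L ^ n)⁻¹ * (L ^ k * L) := by gcongr
      _ ≤ (L ^ n)⁻¹ * L ^ n := by gcongr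
      _ = 1 := inv_mul_cancel₀ (ne_of_gt hLn)

/-- Borel's lemma for the formal series `∑ aₙ Re zⁿ`. -/
lemma exists_borel (a : ℕ → ℝ) : ∃ f : ℂ → ℝ, ContDiff ℝ (⊤ : ℕ∞) f ∧
    ∀ m : ℕ, iteratedFDeriv ℝ m f 0 = a m • iteratedFDeriv ℝ m (rePow m) 0 := by
  choose g hg hg0 hgb hgs using fun n => exists_cutoff (a n) n
  choose C hC using hgb
  let v : ℕ → ℕ → ℝ := fun k n => if k < n then (1 / 2 : ℝ) ^ n else C n k
  have hv : ∀ k, Summable (v k) := by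
    intro k
    refine (summable_congr_cofinite ?_).1 summable_geometric_two
    rw [Nat.cofinite_eq_atTop]
    filter_upwards [eventually_gt_atTop k] with n hn
    simp [v, hn]
  have hbound : ∀ (k n : ℕ) (x : ℂ), ‖iteratedFDeriv ℝ k (g n) x‖ ≤ v k n := by
    intro k n x
    by_cases h : k < n
    · simpa only [v, if_pos h] using hgs n k h x
    · simpa only [v, if_neg h] using hC n k x
  refine ⟨fun z => ∑' n, g n z,
    contDiff_tsum hg (fun k _ => hv k) fun k n x _ => hbound k n x, fun m => ?_⟩
  rw [iteratedFDeriv_tsum hg (fun k _ => hv k) (fun k n x _ => hbound k n x)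
    (k := m) le_top]
  have hterm : ∀ n, iteratedFDeriv ℝ m (g n) 0 = a n • iteratedFDeriv ℝ m (rePow n) 0 := by
    intro n
    rw [((hg0 n).iteratedFDeriv ℝ m).eq_of_nhds,
      iteratedFDeriv_const_smul_apply (contDiff_rePow n).contDiffAt]
  simp only [hterm]
  refine tsum_eq_single m fun n hn => ?_
  rw [iteratedFDeriv_rePow_of_ne hn.symm, smul_zero]

lemma vanishOrder_eq_top_iff {E : Type*} [NormedAddCommGroup E] [NormedSpace ℝ E] (f : ℂ → E) :
    vanishOrder f = ⊤ ↔ ∀ n : ℕ, iteratedFDeriv ℝ n f 0 = 0 := by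
  rw [vanishOrder, sInf_eq_top]
  constructor
  · intro h n
    by_contra hn
    exact ENat.natCast_ne_top n (h n ⟨n, rfl, hn⟩)
  · rintro h m ⟨n, -, hn⟩
    exact absurd (h n) hn

/-- The Taylor coefficients along the real axis of a real-analytic function on `ℂ` cannot be
`-m · m!`: they grow at most geometrically. -/
lemma not_analytic_of_factorial {u : ℂ → ℝ} (hu : AnalyticAt ℝ u 0)
    (h : ∀ m : ℕ, iteratedFDeriv ℝ m u 0 (fun _ => 1)
      = -((m * m.factorial : ℝ) * m.factorial)) : False := by
  obtain ⟨p, R, hp⟩ := hu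
  obtain ⟨r, hr0, hr⟩ := ENNReal.lt_iff_exists_nnreal_btwn.1 (hp.r_pos.trans_le hp.r_le)
  have hr0' : 0 < r := by exact_mod_cast hr0
  obtain ⟨C, hC0, hC⟩ := p.norm_le_div_pow_of_pos_of_lt_radius hr0' hr
  have hcoef : ∀ m : ℕ, (m * m.factorial : ℝ) ≤ C / (r : ℝ) ^ m := by
    intro m
    have h1 := hp.factorial_smul (y := 1) m
    rw [h m, nsmul_eq_mul] at h1
    have hm : (m.factorial : ℝ) ≠ 0 := by positivity
    have h2 : p m (fun _ => 1) = -(m * m.factorial : ℝ) := by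
      apply mul_left_cancel₀ hm
      linarith
    have h3 := (p m).le_opNorm (fun _ => 1)
    rw [h2, norm_neg, Real.norm_of_nonneg (by positivity)] at h3
    simp only [norm_one, Finset.prod_const_one, mul_one] at h3
    exact h3.trans (hC m)
  have hlim := FloorSemiring.tendsto_pow_div_factorial_atTop ((r : ℝ)⁻¹)
  have hsmall := hlim.eventually (gt_mem_nhds (inv_pos.2 hC0))
  obtain ⟨m, hm, hm1⟩ := (hsmall.and (eventually_ge_atTop 1)).exists
  have hf : (0 : ℝ) < m.factorial := by positivity
  have h1 : (1 : ℝ) ≤ m := by exact_mod_cast hm1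
  have h2 : C / (r : ℝ) ^ m < m.factorial := by
    rw [div_lt_iff₀ hf, inv_mul_eq_div, lt_div_iff₀ hC0, inv_pow] at hm
    rw [div_eq_mul_inv]
    linarith
  nlinarith [hcoef m]

/-- **Example (Kim–Ninh).** There exists a C^∞-smooth hypersurface germ
M = {Re z₁ + f(z₂) = 0} at 0 in ℂ² with τ(M,0) = +∞ which admits no regular holomorphic
curve t ↦ (h(t), t) having infinite order contact with M at 0. -/
theorem statement4 :
    ∃ f : ℂ → ℝ, ContDiff ℝ (⊤ : ℕ∞) f ∧ f 0 = 0 ∧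
      IsInfiniteType (fun z : ℂ × ℂ => z.1.re + f z.2) ∧
      ¬ (∃ (h : ℂ → ℂ) (ε : ℝ), 0 < ε ∧ DifferentiableOn ℂ h (Metric.ball 0 ε) ∧
          h 0 = 0 ∧ vanishOrder (fun t : ℂ => (h t).re + f t) = ⊤) := by
  obtain ⟨f, hf, hD⟩ := exists_borel fun n => (n * n.factorial : ℝ)
  refine ⟨f, hf, ?_, ?_, ?_⟩
  · have h := congrArg (fun L => L (fun _ => (1 : ℂ))) (hD 0)
    simpa using h
  · intro ℓ _
    let P : ℂ → ℂ := fun t => -∑ n ∈ Finset.range (ℓ + 1), ((n * n.factorial : ℝ) : ℂ) * t ^ n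
    have hP : Differentiable ℂ P := by fun_prop
    have hle : vanishOrder (fun t => (P t, t)) ≤ 1 := by
      refine sInf_le ⟨1, by simp, fun h0 => ?_⟩
      have hd : HasFDerivAt (fun t => (P t, t))
          (((fderiv ℂ P 0).prod (ContinuousLinearMap.id ℂ ℂ)).restrictScalars ℝ) (0 : ℂ) :=
        ((hP 0).hasFDerivAt.prodMk (hasFDerivAt_id 0)).restrictScalars ℝ
      have h1 := congrArg (fun L => L (fun _ => (1 : ℂ))) h0
      simp only [iteratedFDeriv_one_apply, hd.fderiv] at h1
      simpa using congrArg Prod.snd h1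
    refine ⟨fun t => (P t, t), (hP.prodMk differentiable_id).differentiableOn, ?_,
      ne_top_of_le_ne_top (by simp) hle, ?_⟩
    · simp only [P, Prod.mk_eq_zero, and_true, neg_eq_zero]
      refine Finset.sum_eq_zero fun n _ => ?_
      rcases n with _ | n <;> simp
    · have hge : ((ℓ + 1 : ℕ) : ℕ∞) ≤ vanishOrder (fun t => (P t).re + f t) := by
        refine le_sInf ?_
        rintro _ ⟨m, rfl, hm⟩
        by_contra hlt
        have hml : m < ℓ + 1 := by
          rw [not_le] at hlt
          exact_mod_cast hlt
        apply hm
        have hPre : (fun t => (P t).re + f t) =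
            f - fun t => ∑ n ∈ Finset.range (ℓ + 1), ((n * n.factorial : ℝ) • rePow n) t := by
          funext t
          simp only [P, rePow, Complex.neg_re, Complex.re_sum, Complex.re_ofReal_mul,
            Pi.sub_apply, Pi.smul_apply, smul_eq_mul]
          ring
        have hc : ∀ n ∈ Finset.range (ℓ + 1),
            ContDiffAt ℝ m ((n * n.factorial : ℝ) • rePow n) 0 := fun n _ =>
          (contDiff_const.smul (contDiff_rePow n)).contDiffAt
        rw [hPre, iteratedFDeriv_sub_apply (hf.of_le (by exact_mod_cast le_top)).contDiffAt
          (ContDiffAt.sum hc), iteratedFDeriv_fun_sum_apply hc, hD m, sub_eq_zero]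
        rw [Finset.sum_eq_single_of_mem m (Finset.mem_range.2 hml),
          iteratedFDeriv_const_smul_apply (contDiff_rePow m).contDiffAt]
        intro n _ hn
        rw [iteratedFDeriv_const_smul_apply (contDiff_rePow n).contDiffAt,
          iteratedFDeriv_rePow_of_ne hn.symm, smul_zero]
      calc (ℓ : ℕ∞) * vanishOrder (fun t => (P t, t)) ≤ ℓ * 1 := by gcongr
        _ < ((ℓ + 1 : ℕ) : ℕ∞) := by
          rw [mul_one]
          exact_mod_cast Nat.lt_succ_self ℓ
        _ ≤ _ := hge
  · rintro ⟨h, ε, hε, hh, -, htop⟩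
    rw [vanishOrder_eq_top_iff] at htop
    have hha : AnalyticAt ℝ h 0 :=
      (hh.analyticAt (Metric.ball_mem_nhds 0 hε)).restrictScalars
    have hu : AnalyticAt ℝ (fun t => (h t).re) 0 :=
      (Complex.reCLM.analyticAt _).comp hha
    refine not_analytic_of_factorial hu fun m => ?_
    have h1 := htop m
    rw [fun_iteratedFDeriv_add_apply hu.contDiffAt
      (hf.of_le (by exact_mod_cast le_top)).contDiffAt, hD m] at h1
    rw [eq_neg_of_add_eq_zero_left h1]
    simp [iteratedFDeriv_rePow_self_one]
end

section
/- Let P be a C^∞-smooth real-valued function on a disc around 0 in ℂ with P(0)=0, P(z) > 0 for all z ≠ 0, and P vanishing to infinite order at 0. Then for every real number β and every nonnegative integer n, the function z ↦ Re[1 + iβ z P'(z)/P(z)^{n+1}] does not tend to 0 as z → 0 (z ≠ 0). -/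
/-!
In polar coordinates, `Re (i z P'(z)) = (1/2) ∂P/∂θ`, so the function in question is
`1 + (β/2) P_θ / P^(n+1)`. On every small circle `|z| = r` the continuous function `P` attains a
maximum, and there `P_θ = 0`, so the function takes the value `1` at points arbitrarily
close to `0`.
-/

open Complex Metric Filter Topology Asymptotics

/-- `Re (i β z P'(z))` is `β/2` times the derivative of `P` along the rotation field `i z`. -/
lemma re_I_mul_wirtingerR (P : ℂ → ℝ) (z : ℂ) (hd : DifferentiableAt ℝ P z) (β : ℝ) :
    (Complex.I * (β : ℂ) * z * wirtingerR P z).re = β / 2 * fderiv ℝ P z (Complex.I * z) := by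
  have hf : ∀ v, fderiv ℝ (fun w => (P w : ℂ)) z v = ((fderiv ℝ P z v : ℝ) : ℂ) := by
    intro v
    have h := (Complex.ofRealCLM.hasFDerivAt (x := P z)).comp z hd.hasFDerivAt
    have h' : fderiv ℝ (fun w => (P w : ℂ)) z = Complex.ofRealCLM.comp (fderiv ℝ P z) :=
      h.fderiv
    rw [h']
    rfl
  have hz : Complex.I * z = (-z.im) • (1 : ℂ) + z.re • Complex.I := by
    apply Complex.ext <;> simp
  rw [hz, map_add, map_smul, map_smul]
  simp only [wirtingerR, wirtinger, hf]
  simp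
  ring

/-- The tangential derivative of `P` vanishes at a maximum of `P` on a circle centred at `0`. -/
lemma fderiv_rotation_eq_zero (P : ℂ → ℝ) (z : ℂ) (hd : DifferentiableAt ℝ P z)
    (hmax : ∀ w, ‖w‖ = ‖z‖ → P w ≤ P z) : fderiv ℝ P z (Complex.I * z) = 0 := by
  have hc : HasDerivAt (fun t : ℝ => Complex.exp (t * Complex.I) * z) (Complex.I * z) 0 := by
    have h := (((Complex.ofRealCLM.hasDerivAt (x := (0 : ℝ))).mul_const Complex.I).cexp).mul_const z
    simpa using h
  have hd' : HasFDerivAt P (fderiv ℝ P z) (Complex.exp (((0 : ℝ) : ℂ) * Complex.I) * z) := by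
    simpa using hd.hasFDerivAt
  have h := hd'.comp_hasDerivAt (0 : ℝ) hc
  refine IsLocalMax.hasDerivAt_eq_zero (Filter.Eventually.of_forall fun t => ?_) h
  simpa using hmax (Complex.exp (t * Complex.I) * z) (by simp [Complex.norm_exp_ofReal_mul_I])

/-- **Lemma 1 (Kim–Ninh).** Let P be a C^∞ real-valued function on a disc around 0 with
P(0)=0, P > 0 off 0, vanishing to infinite order at 0. For any real β and any nonnegative
integer n, the function Re[1 + iβ z P'(z)/P(z)^{n+1}] does not tend to 0 as z → 0, z ≠ 0. -/
theorem statement5 (ε₀ : ℝ) (hε₀ : 0 < ε₀) (P : ℂ → ℝ)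
    (hPsm : ContDiffOn ℝ (⊤ : ℕ∞) P (Metric.ball 0 ε₀))
    (hP0 : P 0 = 0)
    (hPpos : ∀ z ∈ Metric.ball (0 : ℂ) ε₀, z ≠ 0 → 0 < P z)
    (hPflat : ∀ n : ℕ, iteratedFDeriv ℝ n P 0 = 0)
    (β : ℝ) (n : ℕ) :
    ¬ Filter.Tendsto
        (fun z : ℂ =>
          ((1 : ℂ) + Complex.I * (β : ℂ) * z * wirtingerR P z / (P z : ℂ) ^ (n + 1)).re)
        (𝓝[≠] (0 : ℂ)) (𝓝 0) := by
  intro h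
  have hev := h (Metric.ball_mem_nhds 0 one_pos)
  obtain ⟨δ, hδ, hball⟩ := Metric.mem_nhdsWithin_iff.1 hev
  obtain ⟨r, hr0, hr⟩ := exists_between (lt_min hδ hε₀)
  have hsub : ∀ w ∈ Metric.sphere (0 : ℂ) r, w ∈ Metric.ball (0 : ℂ) ε₀ := by
    intro w hw
    rw [mem_sphere_zero_iff_norm] at hw
    rw [mem_ball_zero_iff, hw]
    exact hr.trans_le (min_le_right _ _)
  obtain ⟨z, hz, hmax⟩ := (isCompact_sphere (0 : ℂ) r).exists_isMaxOn
    (NormedSpace.sphere_nonempty.2 hr0.le) (hPsm.continuousOn.mono hsub)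
  have hd : DifferentiableAt ℝ P z :=
    (hPsm.contDiffAt (Metric.isOpen_ball.mem_nhds (hsub z hz))).differentiableAt (by simp)
  have hzr : ‖z‖ = r := mem_sphere_zero_iff_norm.1 hz
  have hz0 : z ≠ 0 := by
    rw [← norm_pos_iff, hzr]
    exact hr0
  have hzero : fderiv ℝ P z (Complex.I * z) = 0 :=
    fderiv_rotation_eq_zero P z hd fun w hw =>
      hmax (mem_sphere_zero_iff_norm.2 (hw.trans hzr))
  have hmem := hball ⟨mem_ball_zero_iff.2 (hzr ▸ hr.trans_le (min_le_left _ _)), hz0⟩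
  rw [Set.mem_preimage, mem_ball_zero_iff, ← Complex.ofReal_pow, Complex.add_re,
    Complex.div_ofReal_re, re_I_mul_wirtingerR P z hd, hzero] at hmem
  simp at hmem
end

section
/- Let P be a C^∞-smooth real-valued function on a disc {|z| < ε₀} in ℂ with P(0)=0, P(z) > 0 for all z ≠ 0, and P vanishing to infinite order at 0. Let Δ*_{ε₀} = {z ∈ ℂ : 0 < |z| < ε₀} be the punctured disc. If γ: (0,1) → Δ*_{ε₀} is a C¹-smooth curve with lim_{t→0⁺} γ(t) = 0, then for any nonnegative integer n the function t ↦ Re[γ'(t) · P'(γ(t))/P(γ(t))^{n+1}] is unbounded on (0,1). -/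
/-!
Write `u t = P (γ t)`. The chain rule gives `2 * Re (γ' * P'(γ)) = u'`, so a bound on the function
in question is a bound `|u' / u ^ (n + 1)| ≤ 2 * C`. Near `t = 0` one has `0 < u ≤ 1`, whence
`|(log u)'| = |u' / u| ≤ 2 * C` there, and `log u` stays bounded by the mean value inequality.
This contradicts `u → P 0 = 0`, i.e. `log u → -∞`.
-/

open Complex Metric Filter Topology Asymptotics

/-- The real part of `v * ∂f/∂z` is half the derivative of `f` in the direction `v`. -/
lemma re_mul_wirtingerR {f : ℂ → ℝ} {z : ℂ} (hf : DifferentiableAt ℝ f z) (v : ℂ) :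
    (v * wirtingerR f z).re = fderiv ℝ f z v / 2 := by
  have h : fderiv ℝ (fun w => (f w : ℂ)) z = Complex.ofRealCLM.comp (fderiv ℝ f z) :=
    (Complex.ofRealCLM.hasFDerivAt.comp z hf.hasFDerivAt).fderiv
  have hv : fderiv ℝ f z v = v.re * fderiv ℝ f z 1 + v.im * fderiv ℝ f z Complex.I := by
    have : v = v.re • (1 : ℂ) + v.im • Complex.I := by
      apply Complex.ext <;> simp
    conv_lhs => rw [this]
    simp only [map_add, map_smul, smul_eq_mul]
  rw [hv, wirtingerR, wirtinger, h]
  simp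
  ring

/-- A positive function on `(0, 1)` tending to `0` at `0` has unbounded `u' / u ^ (n + 1)`. -/
lemma not_bounded_deriv_div_pow {u u' : ℝ → ℝ} (n : ℕ) (C : ℝ)
    (hu : ∀ t ∈ Set.Ioo (0 : ℝ) 1, HasDerivAt u (u' t) t)
    (hpos : ∀ t ∈ Set.Ioo (0 : ℝ) 1, 0 < u t)
    (hlim : Tendsto u (𝓝[>] 0) (𝓝 0)) :
    ¬ ∀ t ∈ Set.Ioo (0 : ℝ) 1, |u' t / u t ^ (n + 1)| ≤ C := by
  intro hC
  have hev : ∀ᶠ t in 𝓝[>] (0 : ℝ), u t < 1 := hlim.eventually_lt_const one_pos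
  obtain ⟨d, hd, hd1⟩ := (mem_nhdsGT_iff_exists_Ioo_subset' (one_pos (α := ℝ))).1
    (Filter.inter_mem hev (Ioo_mem_nhdsGT (one_pos (α := ℝ))))
  have hd : 0 < d := hd
  have hderiv : ∀ t ∈ Set.Ioo 0 d,
      HasDerivWithinAt (fun s => Real.log (u s)) (u' t / u t) (Set.Ioo 0 d) t := fun t ht =>
    ((hu t (hd1 ht).2).log (hpos t (hd1 ht).2).ne').hasDerivWithinAt
  have hbound : ∀ t ∈ Set.Ioo 0 d, ‖u' t / u t‖ ≤ C := by
    intro t ht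
    have h0 := hpos t (hd1 ht).2
    have h1 : u t < 1 := (hd1 ht).1
    have heq : u' t / u t = u' t / u t ^ (n + 1) * u t ^ n := by
      field_simp
      ring
    rw [heq, norm_mul, Real.norm_eq_abs, norm_pow, Real.norm_of_nonneg h0.le]
    exact (mul_le_of_le_one_right (abs_nonneg _) (pow_le_one₀ h0.le h1.le)).trans
      (hC t (hd1 ht).2)
  have hm : d / 2 ∈ Set.Ioo 0 d := ⟨by linarith, by linarith⟩
  have hC0 : 0 ≤ C := (norm_nonneg _).trans (hbound _ hm)
  have hbdd : ∀ t ∈ Set.Ioo 0 d, Real.log (u (d / 2)) - C * d ≤ Real.log (u t) := by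
    intro t ht
    have h := (convex_Ioo 0 d).norm_image_sub_le_of_norm_hasDerivWithin_le hderiv hbound ht hm
    have h2 : ‖d / 2 - t‖ ≤ d := by
      rw [Real.norm_eq_abs, abs_le]
      constructor <;> linarith [ht.1, ht.2]
    have h3 := (le_abs_self _).trans (h.trans (mul_le_mul_of_nonneg_left h2 hC0))
    linarith
  have hlog : Tendsto (fun t => Real.log (u t)) (𝓝[>] 0) atBot := by
    refine Real.tendsto_log_nhdsGT_zero.comp (tendsto_nhdsWithin_iff.2 ⟨hlim, ?_⟩)
    filter_upwards [Ioo_mem_nhdsGT (one_pos (α := ℝ))] with t ht using hpos t ht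
  obtain ⟨t, ht, ht'⟩ := ((hlog.eventually_lt_atBot (Real.log (u (d / 2)) - C * d)).and
    (Ioo_mem_nhdsGT hd)).exists
  exact (hbdd t ht').not_gt ht

/-- **Lemma 2 (Kim–Ninh).** Let P be a C^∞ real-valued function on the disc {|z| < ε₀} with
P(0)=0, P > 0 off 0, vanishing to infinite order at 0. If γ : (0,1) → Δ*_{ε₀} is a C¹ curve
into the punctured disc with γ(t) → 0 as t → 0⁺, then for any nonnegative integer n the
function t ↦ Re[γ'(t) P'(γ(t))/P(γ(t))^{n+1}] is unbounded on (0,1). -/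
theorem statement6 (ε₀ : ℝ) (hε₀ : 0 < ε₀) (P : ℂ → ℝ)
    (hPsm : ContDiffOn ℝ (⊤ : ℕ∞) P (Metric.ball 0 ε₀))
    (hP0 : P 0 = 0)
    (hPpos : ∀ z ∈ Metric.ball (0 : ℂ) ε₀, z ≠ 0 → 0 < P z)
    (hPflat : ∀ n : ℕ, iteratedFDeriv ℝ n P 0 = 0)
    (γ : ℝ → ℂ) (hγ : ContDiffOn ℝ 1 γ (Set.Ioo 0 1))
    (hγmem : ∀ t ∈ Set.Ioo (0 : ℝ) 1, γ t ∈ Metric.ball (0 : ℂ) ε₀ ∧ γ t ≠ 0)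
    (hγlim : Filter.Tendsto γ (𝓝[>] (0 : ℝ)) (𝓝 0))
    (n : ℕ) :
    ¬ (∃ C : ℝ, ∀ t ∈ Set.Ioo (0 : ℝ) 1,
        |(deriv γ t * wirtingerR P (γ t) / (P (γ t) : ℂ) ^ (n + 1)).re| ≤ C) := by
  rintro ⟨C, hC⟩
  have hdiff : ∀ z ∈ Metric.ball (0 : ℂ) ε₀, DifferentiableAt ℝ P z := fun z hz =>
    (hPsm.contDiffAt (Metric.isOpen_ball.mem_nhds hz)).differentiableAt (by simp)
  have hγd : ∀ t ∈ Set.Ioo (0 : ℝ) 1, HasDerivAt γ (deriv γ t) t := fun t ht =>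
    ((hγ.contDiffAt (isOpen_Ioo.mem_nhds ht)).differentiableAt (by simp)).hasDerivAt
  have hlim : Tendsto (fun t => P (γ t)) (𝓝[>] 0) (𝓝 0) := by
    have h := (hdiff 0 (Metric.mem_ball_self hε₀)).continuousAt.tendsto
    rw [hP0] at h
    exact h.comp hγlim
  refine not_bounded_deriv_div_pow (u := fun t => P (γ t))
    (u' := fun t => fderiv ℝ P (γ t) (deriv γ t)) n (2 * C)
    (fun t ht => (hdiff _ (hγmem t ht).1).hasFDerivAt.comp_hasDerivAt t (hγd t ht))
    (fun t ht => hPpos _ (hγmem t ht).1 (hγmem t ht).2) hlim (fun t ht => ?_)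
  have h := hC t ht
  rw [← Complex.ofReal_pow, Complex.div_ofReal_re,
    re_mul_wirtingerR (hdiff _ (hγmem t ht).1), div_right_comm, abs_div, abs_two] at h
  linarith
end

section
/- Let P be a C^∞-smooth real-valued function on a disc around 0 in ℂ with P(0)=0, P(z) > 0 for all z ≠ 0, and P vanishing to infinite order at 0. Let a, b be complex numbers, let ℓ, m, n be nonnegative integers, and let g₁, g₂ be smooth functions on the punctured disc Δ*_{ε₀} = {0 < |z| < ε₀} (ε₀ sufficiently small) satisfying: (A1) g₁(z) = O(|z|^ℓ) and g₂(z) = o(|z|^m) as z → 0; (A2) Re[a z^m + (1/P(z)^n)·(b z^ℓ P'(z)/P(z) + g₁(z))] = g₂(z) for every z ∈ Δ*_{ε₀}. If neither of the exceptional cases (E1) ℓ = 1 and Re b = 0, nor (E2) m = 0 and Re a = 0, holds, then ab = 0. -/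
/-!
Suppose `a` and `b` are both nonzero. Since `d/dt P (γ t) = 2 Re (P' (γ t) γ' t)`, equation (A2)
prescribes the logarithmic derivative of `P` along integral curves of the vector field `b z ^ l`.
Some of these reach the origin and can be parametrised by `r = ‖z‖`: rays when `l ≠ 1`, logarithmic
spirals when `l = 1` and `Re b ≠ 0` (`exists_curve`). After rescaling by a real constant `c`, the
equation on such a curve reads

  `(log P)' = (2 / c) r ^ (-l) (P ^ n (g₂ - Re (a z ^ m)) - Re g₁)`.

An upper bound `C / r` on the right side forces `P ≥ const * r ^ C` and contradicts flatness
(`no_flat_of_deriv_le`, `no_curve`). The term in `g₁` is bounded. The other term is `O(1 / r)` if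
`n ≥ 1`, by flatness, or if `l ≤ m + 1`. There remains `n = 0`, `m < k := l - 1`. Then there are
`2k` invariant rays, along `ω ζ ^ j` with `b ω ^ k > 0` and `ζ = exp (i π / k)`, and `c` has the sign
`(-1) ^ j` there. To avoid the upper bound each ray must satisfy
`(-1) ^ j Re (a (ω ζ ^ j) ^ m) ≤ 0`. These numbers add up to zero (`re_eq_zero_of_pow`), so they all
vanish. This yields `Re a = 0` if `m = 0`, and `a = 0` if `m > 0` because `ζ ^ m` is not real.
-/

open Complex Metric Filter Topology Asymptotics

/-! ### Flat functions -/

/-- A smooth function whose whole jet vanishes at `0` is `O(‖z‖ ^ N)` for every `N`: induct on `N`,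
applying the induction hypothesis to the derivative and then the mean value inequality. -/
lemma flat_isBigO (N : ℕ) : ∀ {F : Type} [NormedAddCommGroup F] [NormedSpace ℝ F] (f : ℂ → F),
    ContDiffAt ℝ (⊤ : ℕ∞) f 0 → (∀ k : ℕ, iteratedFDeriv ℝ k f 0 = 0) →
    f =O[𝓝 0] fun z => ‖z‖ ^ N := by
  induction N with
  | zero =>
    intro F _ _ f hf _
    simpa using hf.continuousAt.isBigO_one ℝ
  | succ N ih =>
    intro F _ _ f hf h0
    have hf' : ContDiffAt ℝ (⊤ : ℕ∞) (fderiv ℝ f) 0 := hf.fderiv_right (by simp)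
    have hder := ih (fderiv ℝ f) hf' (fun k => by
      rw [← norm_eq_zero, norm_iteratedFDeriv_fderiv, h0, norm_zero])
    have hf0 : f 0 = 0 := by
      have := h0 0
      rw [← norm_eq_zero, norm_iteratedFDeriv_zero, norm_eq_zero] at this
      exact this
    obtain ⟨C, hC⟩ := hder.bound
    have hd : ∀ᶠ z in 𝓝 (0 : ℂ), DifferentiableAt ℝ f z := by
      have h1 : ContDiffAt ℝ 1 f 0 := hf.of_le (by exact_mod_cast le_top)
      filter_upwards [h1.eventually (by simp)] with z hz
      exact hz.differentiableAt (by simp)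
    obtain ⟨δ, hδ, hball⟩ := Metric.eventually_nhds_iff_ball.1 (hC.and hd)
    refine IsBigO.of_bound C ?_
    filter_upwards [Metric.ball_mem_nhds (0 : ℂ) hδ] with z hz
    have hz' : ‖z‖ < δ := by simpa using hz
    have hsub : Metric.closedBall (0 : ℂ) ‖z‖ ⊆ Metric.ball 0 δ :=
      Metric.closedBall_subset_ball hz'
    have hCpos : 0 ≤ C * ‖z‖ ^ N := by
      have := (hball z hz).1
      rw [norm_pow, norm_norm] at this
      exact (norm_nonneg _).trans this
    have hCw : ∀ w ∈ Metric.closedBall (0 : ℂ) ‖z‖, ‖fderiv ℝ f w‖ ≤ C * ‖z‖ ^ N := by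
      intro w hw
      have h1 := (hball w (hsub hw)).1
      rw [norm_pow, norm_norm] at h1
      have hw' : ‖w‖ ≤ ‖z‖ := by simpa using hw
      rcases eq_or_ne z 0 with rfl | hz0
      · have : w = 0 := by simpa using hw
        simpa [this] using h1
      · have hC0 : 0 ≤ C := nonneg_of_mul_nonneg_left hCpos (by positivity)
        exact h1.trans (by gcongr)
    have := (convex_closedBall (0 : ℂ) ‖z‖).norm_image_sub_le_of_norm_fderiv_le
      (fun w hw => (hball w (hsub hw)).2) hCw (x := 0) (y := z) (by simp) (by simp)
    rw [hf0, sub_zero, sub_zero] at this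
    rw [norm_pow, norm_norm, pow_succ, ← mul_assoc]
    exact this

/-- A positive function on `(0, δ)` with `p' ≤ N p / r` cannot be `o(r ^ N)` at `0`, because
`p r / r ^ N` is nonincreasing. -/
lemma no_flat_of_deriv_le (p p' : ℝ → ℝ) (δ : ℝ) (hδ : 0 < δ) (N : ℕ)
    (hp : ∀ r ∈ Set.Ioo 0 δ, HasDerivAt p (p' r) r)
    (hpos : ∀ r ∈ Set.Ioo 0 δ, 0 < p r)
    (hle : ∀ r ∈ Set.Ioo 0 δ, r * p' r ≤ N * p r)
    (ht : Tendsto (fun r => p r / r ^ N) (𝓝[>] 0) (𝓝 0)) : False := by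
  have hder : ∀ r ∈ Set.Ioo 0 δ, HasDerivAt (fun r => p r / r ^ N)
      ((p' r * r ^ N - p r * (N * r ^ (N - 1))) / (r ^ N) ^ 2) r := by
    intro r hr
    exact (hp r hr).div (hasDerivAt_pow N r) (pow_ne_zero _ hr.1.ne')
  have hanti : AntitoneOn (fun r => p r / r ^ N) (Set.Ioo 0 δ) := by
    refine antitoneOn_of_deriv_nonpos (convex_Ioo 0 δ)
      (fun r hr => (hder r hr).continuousAt.continuousWithinAt)
      (fun r hr => ?_) (fun r hr => ?_)
    · rw [interior_Ioo] at hr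
      exact (hder r hr).differentiableAt.differentiableWithinAt
    · rw [interior_Ioo] at hr
      rw [(hder r hr).deriv]
      have hr0 : 0 < r := hr.1
      refine div_nonpos_of_nonpos_of_nonneg ?_ (by positivity)
      have h := hle r hr
      cases N with
      | zero =>
        simp only [Nat.cast_zero, zero_mul, pow_zero, mul_one, mul_zero, sub_zero] at h ⊢
        exact nonpos_of_mul_nonpos_right h hr0
      | succ N =>
        have : 0 < r ^ N := by positivity
        simp only [Nat.add_sub_cancel, pow_succ]
        nlinarith
  have hmid : δ / 2 ∈ Set.Ioo 0 δ := ⟨by linarith, by linarith⟩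
  have hge : p (δ / 2) / (δ / 2) ^ N ≤ 0 := by
    refine ge_of_tendsto ht ?_
    filter_upwards [Ioo_mem_nhdsGT (half_pos hδ)] with r hr
    exact hanti ⟨hr.1, by linarith [hr.2]⟩ hmid hr.2.le
  have : 0 < p (δ / 2) / (δ / 2) ^ N := div_pos (hpos _ hmid) (pow_pos hmid.1 _)
  linarith

/-! ### The equation along an integral curve -/

lemma fderiv_eq_wirtingerR {P : ℂ → ℝ} {z : ℂ} (h : DifferentiableAt ℝ P z) (v : ℂ) :
    fderiv ℝ P z v = 2 * (wirtingerR P z * v).re := by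
  have h1 : HasFDerivAt (fun w => (P w : ℂ)) (Complex.ofRealCLM.comp (fderiv ℝ P z)) z :=
    Complex.ofRealCLM.hasFDerivAt.comp z h.hasFDerivAt
  have hv : v = v.re • (1 : ℂ) + v.im • Complex.I := by
    simp [Complex.re_add_im]
  conv_lhs => rw [hv]
  rw [map_add, map_smul, map_smul]
  simp [wirtingerR, wirtinger, h1.fderiv]
  ring

/-- If `γ` satisfies `‖γ r‖ = r` and is, up to a real reparametrisation, an integral curve of the
vector field `b z ^ l`, then the logarithmic derivative of `P ∘ γ` is controlled by (A2). A one-sided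
bound `C / r` on the term carrying `P ^ n` contradicts the flatness of `P`. -/
lemma no_curve (ε₀ : ℝ) (hε₀ : 0 < ε₀) (P : ℂ → ℝ)
    (hPsm : ContDiffOn ℝ (⊤ : ℕ∞) P (Metric.ball 0 ε₀))
    (hPpos : ∀ z ∈ Metric.ball (0 : ℂ) ε₀, z ≠ 0 → 0 < P z)
    (hflat : ∀ N : ℕ, P =O[𝓝 0] fun z => ‖z‖ ^ N)
    (a b : ℂ) (l m n : ℕ) (g₁ : ℂ → ℂ) (g₂ : ℂ → ℝ)
    (hg₁ : g₁ =O[𝓝[≠] (0 : ℂ)] fun z => ‖z‖ ^ l)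
    (heq : ∀ z ∈ Metric.ball (0 : ℂ) ε₀ \ {0},
      (a * z ^ m + (1 / (P z : ℂ) ^ n) *
        (b * z ^ l * wirtingerR P z / (P z : ℂ) + g₁ z)).re = g₂ z)
    (γ γ' : ℝ → ℂ) (hγ : ∀ r, 0 < r → HasDerivAt γ (γ' r) r) (hnorm : ∀ r, 0 < r → ‖γ r‖ = r)
    (hγ0 : Tendsto γ (𝓝[>] 0) (𝓝[≠] 0))
    (c : ℝ) (hc : c ≠ 0) (hcurve : ∀ r, 0 < r → b * γ r ^ l = c * r ^ l * γ' r)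
    (C : ℝ) (hC : ∀ᶠ r in 𝓝[>] (0 : ℝ),
      r * (P (γ r) ^ n * (g₂ (γ r) - (a * γ r ^ m).re) / c) ≤ C * r ^ l) : False := by
  obtain ⟨C₁, hC₁pos, hC₁⟩ := (hg₁.comp_tendsto hγ0).exists_pos
  have hC₁ := hC₁.bound
  obtain ⟨N, hN⟩ := exists_nat_ge (2 * (C + C₁ / |c|))
  have hlt : ∀ᶠ r in 𝓝[>] (0 : ℝ), r < 1 ∧ r < ε₀ :=
    nhdsWithin_le_nhds ((eventually_lt_nhds one_pos).and (eventually_lt_nhds hε₀))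
  obtain ⟨δ, hδ, hall⟩ := mem_nhdsGT_iff_exists_Ioo_subset.1 ((hC.and hC₁).and hlt)
  have hmem : ∀ r ∈ Set.Ioo 0 δ, γ r ∈ Metric.ball (0 : ℂ) ε₀ := by
    intro r hr
    have := (hall hr).2.2
    simpa [hnorm r hr.1] using this
  have hne : ∀ r, 0 < r → γ r ≠ 0 := by
    intro r hr h
    have := hnorm r hr
    rw [h, norm_zero] at this
    exact hr.ne this
  have hdiff : ∀ r ∈ Set.Ioo 0 δ, DifferentiableAt ℝ P (γ r) := fun r hr =>
    (hPsm.contDiffAt (Metric.isOpen_ball.mem_nhds (hmem r hr))).differentiableAt (by simp)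
  refine no_flat_of_deriv_le (fun r => P (γ r)) (fun r => fderiv ℝ P (γ r) (γ' r)) δ hδ N
    (fun r hr => (hdiff r hr).hasFDerivAt.comp_hasDerivAt r (hγ r hr.1))
    (fun r hr => hPpos _ (hmem r hr) (hne r hr.1)) (fun r hr => ?_) ?_
  · have hr0 : 0 < r := hr.1
    have hp : 0 < P (γ r) := hPpos _ (hmem r hr) (hne r hr0)
    have h1 := heq (γ r) ⟨hmem r hr, hne r hr0⟩
    obtain ⟨⟨hX, hG⟩, hr1, -⟩ := hall hr
    simp only [Function.comp, hnorm r hr0, norm_pow, Real.norm_of_nonneg hr0.le] at hG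
    have hcv := hcurve r hr0
    rw [fderiv_eq_wirtingerR (hdiff r hr)]
    set p := P (γ r)
    set W := wirtingerR P (γ r)
    have e1 : (1 / (p : ℂ) ^ n) * (b * γ r ^ l * W / (p : ℂ) + g₁ (γ r))
        = ((1 / p ^ n : ℝ) : ℂ) * (((c * r ^ l / p : ℝ) : ℂ) * (W * γ' r) + g₁ (γ r)) := by
      rw [hcv]; push_cast; ring
    rw [e1, Complex.add_re, Complex.re_ofReal_mul, Complex.add_re, Complex.re_ofReal_mul] at h1
    set w := (W * γ' r).re
    have hrl : 0 < r ^ l := by positivity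
    have hpn : 0 < p ^ n := by positivity
    have e2 : r ^ l * w
        = p * (p ^ n * (g₂ (γ r) - (a * γ r ^ m).re) / c - (g₁ (γ r)).re / c) := by
      rw [← h1]; field_simp; ring
    have hG2 : -((g₁ (γ r)).re / c) ≤ C₁ / |c| * r ^ l := by
      refine (neg_le_abs _).trans ?_
      rw [abs_div, div_mul_eq_mul_div]
      gcongr
      exact (Complex.abs_re_le_norm _).trans hG
    have hG3 : r * -((g₁ (γ r)).re / c) ≤ C₁ / |c| * r ^ l := by
      have h0 : 0 ≤ C₁ / |c| * r ^ l := by positivity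
      calc r * -((g₁ (γ r)).re / c) ≤ r * (C₁ / |c| * r ^ l) := by gcongr
        _ ≤ 1 * (C₁ / |c| * r ^ l) := by gcongr
        _ = _ := one_mul _
    refine le_of_mul_le_mul_left ?_ hrl
    calc r ^ l * (r * (2 * w)) = 2 * r * (r ^ l * w) := by ring
      _ = 2 * p * (r * (p ^ n * (g₂ (γ r) - (a * γ r ^ m).re) / c)
            + r * -((g₁ (γ r)).re / c)) := by rw [e2]; ring
      _ ≤ 2 * p * (C * r ^ l + C₁ / |c| * r ^ l) := by gcongr
      _ = p * r ^ l * (2 * (C + C₁ / |c|)) := by ring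
      _ ≤ p * r ^ l * N := by gcongr
      _ = r ^ l * (N * p) := by ring
  · obtain ⟨M, hM⟩ := ((hflat (N + 1)).comp_tendsto (hγ0.mono_right nhdsWithin_le_nhds)).bound
    have hlim : Tendsto (fun r : ℝ => M * r) (𝓝[>] 0) (𝓝 0) := by
      have : Tendsto (fun r : ℝ => M * r) (𝓝 0) (𝓝 (M * 0)) := tendsto_id.const_mul M
      rw [mul_zero] at this
      exact this.mono_left nhdsWithin_le_nhds
    refine squeeze_zero_norm' ?_ hlim
    filter_upwards [hM, self_mem_nhdsWithin] with r hr hr0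
    have hr0 : 0 < r := hr0
    simp only [Function.comp, hnorm r hr0, norm_pow, Real.norm_of_nonneg hr0.le] at hr
    rw [norm_div, norm_pow, Real.norm_of_nonneg hr0.le, div_le_iff₀ (by positivity)]
    exact hr.trans_eq (by ring)

lemma tendsto_curve {γ : ℝ → ℂ} (hnorm : ∀ r, 0 < r → ‖γ r‖ = r) :
    Tendsto γ (𝓝[>] 0) (𝓝[≠] 0) := by
  refine tendsto_nhdsWithin_iff.2 ⟨?_, ?_⟩
  · refine squeeze_zero_norm' (a := fun r => r) ?_ nhdsWithin_le_nhds
    filter_upwards [self_mem_nhdsWithin] with r hr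
    exact (hnorm r hr).le
  · filter_upwards [self_mem_nhdsWithin] with r hr h
    have := hnorm r hr
    rw [h, norm_zero] at this
    exact (ne_of_gt hr) this.symm

/-! ### Integral curves reaching the origin -/

lemma hasDerivAt_ray (ω : ℂ) (r : ℝ) : HasDerivAt (fun r : ℝ => (r : ℂ) * ω) ω r := by
  simpa using ((hasDerivAt_id r).ofReal_comp).mul_const ω

lemma norm_ray {ω : ℂ} (hω : ‖ω‖ = 1) {r : ℝ} (hr : 0 < r) : ‖(r : ℂ) * ω‖ = r := by
  rw [norm_mul, hω, mul_one, Complex.norm_real, Real.norm_of_nonneg hr.le]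

lemma exists_direction (b : ℂ) (hb : b ≠ 0) (k : ℕ) (hk : 0 < k) :
    ∃ ω : ℂ, ‖ω‖ = 1 ∧ b * ω ^ k = ‖b‖ := by
  have hb' : (‖b‖ : ℂ) ≠ 0 := by simpa using hb
  obtain ⟨ω, hω⟩ := IsAlgClosed.exists_pow_nat_eq ((‖b‖ : ℂ) / b) hk
  refine ⟨ω, ?_, by rw [hω]; field_simp⟩
  have : ‖ω‖ ^ k = 1 := by
    rw [← norm_pow, hω, norm_div, Complex.norm_real, norm_norm, div_self (by simpa using hb)]
  exact (pow_eq_one_iff_of_nonneg (norm_nonneg _) hk.ne').1 this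

/-- Outside the case `l = 1`, `b.re = 0`, the field `b z ^ l` has an integral curve reaching `0`
that can be parametrised by its modulus: a ray if `l ≠ 1` and a logarithmic spiral if `l = 1`. -/
lemma exists_curve (b : ℂ) (hb : b ≠ 0) (l : ℕ) (hE1 : ¬ (l = 1 ∧ b.re = 0)) :
    ∃ (γ γ' : ℝ → ℂ) (c : ℝ), (∀ r, 0 < r → HasDerivAt γ (γ' r) r) ∧
      (∀ r, 0 < r → ‖γ r‖ = r) ∧ c ≠ 0 ∧
      ∀ r, 0 < r → b * γ r ^ l = c * r ^ l * γ' r := by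
  rcases Nat.eq_zero_or_pos l with rfl | hl
  · have hb' : (‖b‖ : ℂ) ≠ 0 := by simpa using hb
    have hω : ‖b / ‖b‖‖ = 1 := by simp [hb]
    refine ⟨fun r => r * (b / ‖b‖), fun _ => b / ‖b‖, ‖b‖, fun r _ => hasDerivAt_ray _ r,
      fun r hr => norm_ray hω hr, by simpa using hb, fun r _ => ?_⟩
    simp only [pow_zero, mul_one]
    field_simp
  rcases eq_or_ne l 1 with rfl | hl1
  · have hre : b.re ≠ 0 := fun h => hE1 ⟨rfl, h⟩
    refine ⟨fun r => r * Complex.exp ((b.im / b.re * Real.log r : ℝ) * Complex.I),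
      fun r => (1 + b.im / b.re * Complex.I) *
        Complex.exp ((b.im / b.re * Real.log r : ℝ) * Complex.I), b.re, fun r hr => ?_,
      fun r hr => ?_, hre, fun r hr => ?_⟩
    · have h1 : HasDerivAt (fun r : ℝ => b.im / b.re * Real.log r) (b.im / b.re * r⁻¹) r :=
        (Real.hasDerivAt_log hr.ne').const_mul _
      have h2 := (h1.ofReal_comp.mul_const Complex.I).cexp
      have h3 : HasDerivAt (fun r : ℝ => (r : ℂ)) 1 r := by
        simpa using (hasDerivAt_id r).ofReal_comp
      refine (h3.mul h2).congr_deriv ?_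
      have : (r : ℂ) ≠ 0 := by exact_mod_cast hr.ne'
      push_cast
      field_simp
    · rw [norm_mul, Complex.norm_exp_ofReal_mul_I, mul_one, Complex.norm_real,
        Real.norm_of_nonneg hr.le]
    · have hre' : (b.re : ℂ) ≠ 0 := by exact_mod_cast hre
      have : b = b.re * (1 + b.im / b.re * Complex.I) := by
        rw [mul_add, mul_one, ← mul_assoc, mul_div_cancel₀ _ hre', Complex.re_add_im]
      rw [pow_one, pow_one]
      linear_combination (r * Complex.exp ((b.im / b.re * Real.log r : ℝ) * Complex.I)) * this
  · obtain ⟨ω, hω, hbω⟩ := exists_direction b hb (l - 1) (by omega)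
    refine ⟨fun r => r * ω, fun _ => ω, ‖b‖, fun r _ => hasDerivAt_ray _ r,
      fun r hr => norm_ray hω hr, by simpa using hb, fun r _ => ?_⟩
    obtain ⟨k, rfl⟩ : ∃ k, l = k + 1 := ⟨l - 1, by omega⟩
    rw [Nat.add_sub_cancel] at hbω
    rw [← hbω]
    ring

/-! ### Sign constraints on the invariant rays -/

/-- Constraints `Re (A ρ ^ j) ≤ 0` over a nontrivial finite cyclic group are equalities, since
the left sides add up to zero. -/
lemma re_eq_zero_of_pow {A ρ : ℂ} {k : ℕ} (hk : ρ ^ k = 1) (hρ : ρ ≠ 1)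
    (h : ∀ j : ℕ, (A * ρ ^ j).re ≤ 0) (j : ℕ) (hj : j < k) : (A * ρ ^ j).re = 0 := by
  have hs : ∑ i ∈ Finset.range k, (A * ρ ^ i).re = 0 := by
    rw [← Complex.re_sum, ← Finset.mul_sum, geom_sum_eq hρ, hk]
    simp
  exact (Finset.sum_eq_zero_iff_of_nonpos (fun i _ => h i)).1 hs j (Finset.mem_range.2 hj)

/-! ### The conclusion -/

/-- **Lemma 3 (Kim–Ninh).** Let P be C^∞, P(0)=0, P > 0 off 0 on the disc, vanishing to
infinite order at 0. Let a, b ∈ ℂ, let ℓ, m, n be nonnegative integers, and let g₁, g₂ be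
smooth on the punctured disc Δ*_{ε₀} with (A1) g₁(z) = O(|z|^ℓ) and g₂(z) = o(|z|^m), and
(A2) Re[a z^m + (1/P(z)^n)(b z^ℓ P'(z)/P(z) + g₁(z))] = g₂(z) on Δ*_{ε₀}. If neither
(E1) ℓ = 1 and Re b = 0, nor (E2) m = 0 and Re a = 0 holds, then ab = 0. -/
theorem statement8 (ε₀ : ℝ) (hε₀ : 0 < ε₀) (P : ℂ → ℝ)
    (hPsm : ContDiffOn ℝ (⊤ : ℕ∞) P (Metric.ball 0 ε₀))
    (hP0 : P 0 = 0)
    (hPpos : ∀ z ∈ Metric.ball (0 : ℂ) ε₀, z ≠ 0 → 0 < P z)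
    (hPflat : ∀ n : ℕ, iteratedFDeriv ℝ n P 0 = 0)
    (a b : ℂ) (l m n : ℕ) (g₁ : ℂ → ℂ) (g₂ : ℂ → ℝ)
    (hg₁sm : ContDiffOn ℝ (⊤ : ℕ∞) g₁ (Metric.ball 0 ε₀ \ {0}))
    (hg₂sm : ContDiffOn ℝ (⊤ : ℕ∞) g₂ (Metric.ball 0 ε₀ \ {0}))
    (hg₁ : g₁ =O[𝓝[≠] (0 : ℂ)] fun z => ‖z‖ ^ l)
    (hg₂ : (fun z => g₂ z) =o[𝓝[≠] (0 : ℂ)] fun z => ‖z‖ ^ m)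
    (heq : ∀ z ∈ Metric.ball (0 : ℂ) ε₀ \ {0},
      (a * z ^ m + (1 / (P z : ℂ) ^ n) *
        (b * z ^ l * wirtingerR P z / (P z : ℂ) + g₁ z)).re = g₂ z)
    (hE1 : ¬ (l = 1 ∧ b.re = 0)) (hE2 : ¬ (m = 0 ∧ a.re = 0)) :
    a * b = 0 := by
  by_contra hab
  obtain ⟨ha, hb⟩ := mul_ne_zero_iff.1 hab
  have hflat : ∀ N : ℕ, P =O[𝓝 0] fun z => ‖z‖ ^ N := fun N =>
    flat_isBigO N P (hPsm.contDiffAt (Metric.ball_mem_nhds 0 hε₀)) hPflat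
  rcases le_or_gt l (1 + m + l * n) with hlmn | hlmn
  · -- Here `r * P ^ n * r ^ m = O(r ^ l)`, so any integral curve reaching `0` will do.
    obtain ⟨γ, γ', c, hγ, hnorm, hc, hcurve⟩ := exists_curve b hb l hE1
    have hγ0 := tendsto_curve hnorm
    obtain ⟨M, hMpos, hM⟩ :=
      ((hflat l).comp_tendsto (hγ0.mono_right nhdsWithin_le_nhds)).exists_pos
    have hG := (hg₂.comp_tendsto hγ0).bound one_pos
    refine no_curve ε₀ hε₀ P hPsm hPpos hflat a b l m n g₁ g₂ hg₁ heq γ γ' hγ hnorm hγ0 c hc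
      hcurve (M ^ n * (1 + ‖a‖) / |c|) ?_
    have hlt : ∀ᶠ r in 𝓝[>] (0 : ℝ), r < 1 := nhdsWithin_le_nhds (eventually_lt_nhds one_pos)
    filter_upwards [hM.bound, hG, hlt, self_mem_nhdsWithin] with r h1 h2 hr1 hr0
    have hr0 : 0 < r := hr0
    simp only [Function.comp, hnorm r hr0, norm_pow, Real.norm_of_nonneg hr0.le, one_mul]
      at h1 h2
    have h3 : |g₂ (γ r) - (a * γ r ^ m).re| ≤ (1 + ‖a‖) * r ^ m := by
      have h4 : |(a * γ r ^ m).re| ≤ ‖a‖ * r ^ m := by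
        refine (Complex.abs_re_le_norm _).trans_eq ?_
        rw [norm_mul, norm_pow, hnorm r hr0]
      calc |g₂ (γ r) - (a * γ r ^ m).re| ≤ |g₂ (γ r)| + |(a * γ r ^ m).re| := abs_sub _ _
        _ ≤ r ^ m + ‖a‖ * r ^ m := add_le_add h2 h4
        _ = _ := by ring
    have h5 : |P (γ r)| ^ n ≤ (M * r ^ l) ^ n := by
      gcongr
      exact h1
    refine (le_abs_self _).trans ?_
    rw [abs_mul, abs_div, abs_mul, abs_pow, abs_of_pos hr0]
    calc r * (|P (γ r)| ^ n * |g₂ (γ r) - (a * γ r ^ m).re| / |c|)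
        ≤ r * ((M * r ^ l) ^ n * ((1 + ‖a‖) * r ^ m) / |c|) := by gcongr
      _ = M ^ n * (1 + ‖a‖) / |c| * r ^ (1 + m + l * n) := by ring
      _ ≤ M ^ n * (1 + ‖a‖) / |c| * r ^ l :=
        mul_le_mul_of_nonneg_left (pow_le_pow_of_le_one hr0.le hr1.le hlmn) (by positivity)
  · have hn : n = 0 := by
      by_contra hn
      have : l ≤ l * n := Nat.le_mul_of_pos_right l (Nat.pos_of_ne_zero hn)
      omega
    subst hn
    obtain ⟨k, rfl⟩ : ∃ k, l = k + 1 := ⟨l - 1, by omega⟩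
    have hmk : m < k := by omega
    have hk : 0 < k := by omega
    -- On an invariant ray the sign of `Re (a ω ^ m)` is constrained by flatness.
    have hray : ∀ (ω : ℂ) (c : ℝ), ‖ω‖ = 1 → c ≠ 0 → b * ω ^ k = c → (a * ω ^ m).re / c ≤ 0 := by
      intro ω c hω hc hbω
      by_contra! hpos
      have hγ0 : Tendsto (fun r : ℝ => (r : ℂ) * ω) (𝓝[>] 0) (𝓝[≠] 0) :=
        tendsto_curve fun r hr => norm_ray hω hr
      refine no_curve ε₀ hε₀ P hPsm hPpos hflat a b (k + 1) m 0 g₁ g₂ hg₁ heq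
        (fun r => r * ω) (fun _ => ω) (fun r _ => hasDerivAt_ray ω r)
        (fun r hr => norm_ray hω hr) hγ0 c hc (fun r _ => by rw [← hbω]; ring) 0 ?_
      have hG := (hg₂.comp_tendsto hγ0).bound
        (c := |c| * ((a * ω ^ m).re / c)) (by positivity)
      filter_upwards [hG, self_mem_nhdsWithin] with r h2 hr0
      have hr0 : 0 < r := hr0
      simp only [Function.comp, norm_ray hω hr0, norm_pow, Real.norm_of_nonneg hr0.le] at h2
      have e : (a * ((r : ℂ) * ω) ^ m).re = r ^ m * (a * ω ^ m).re := by
        rw [← Complex.re_ofReal_mul]; congr 1; push_cast; ring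
      have h3 : g₂ (r * ω) / c ≤ (a * ω ^ m).re / c * r ^ m := by
        refine (le_abs_self _).trans ?_
        rw [abs_div, div_le_iff₀ (by positivity)]
        exact h2.trans_eq (by ring)
      rw [e, pow_zero, one_mul, zero_mul]
      refine mul_nonpos_of_nonneg_of_nonpos hr0.le ?_
      rw [sub_div]
      have : r ^ m * (a * ω ^ m).re / c = (a * ω ^ m).re / c * r ^ m := by ring
      linarith
    obtain ⟨ω, hω, hbω⟩ := exists_direction b hb k hk
    set θ : ℝ := Real.pi / k with hθ
    have hk' : (k : ℂ) ≠ 0 := by exact_mod_cast hk.ne'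
    have hζk : Complex.exp (θ * Complex.I) ^ k = -1 := by
      rw [← Complex.exp_nat_mul, ← Complex.exp_pi_mul_I, hθ]
      congr 1
      push_cast
      field_simp
    have hζ : ‖Complex.exp (θ * Complex.I)‖ = 1 := Complex.norm_exp_ofReal_mul_I θ
    set ζ := Complex.exp (θ * Complex.I) with hζdef
    -- The `2k` invariant rays point along `ω ζ ^ j`, alternately outgoing and incoming, so the
    -- constraints are indexed by the powers of `-ζ ^ m`.
    have hcon : ∀ j : ℕ, (a * ω ^ m * (-ζ ^ m) ^ j).re ≤ 0 := by
      intro j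
      have hbpos : 0 < ‖b‖ := norm_pos_iff.2 hb
      have h := hray (ω * ζ ^ j) ((-1) ^ j * ‖b‖) (by simp [hω, hζ])
        (mul_ne_zero (pow_ne_zero _ (by norm_num)) hbpos.ne') (by
          rw [mul_pow, ← mul_assoc, hbω, ← pow_mul, mul_comm j k, pow_mul, hζk]
          push_cast; ring)
      have e : (a * ω ^ m * (-ζ ^ m) ^ j) = (((-1) ^ j : ℝ) : ℂ) * (a * (ω * ζ ^ j) ^ m) := by
        rw [neg_pow]; push_cast; ring
      rw [e, Complex.re_ofReal_mul]
      rcases neg_one_pow_eq_or ℝ j with h1 | h1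
      · rw [h1, one_mul] at h ⊢
        exact nonpos_of_mul_nonpos_left (by rwa [div_eq_mul_inv] at h) (inv_pos.2 hbpos)
      · rw [h1] at h ⊢
        rw [neg_one_mul, div_neg, ← neg_div] at h
        rw [neg_one_mul]
        exact nonpos_of_mul_nonpos_left (by rwa [div_eq_mul_inv] at h) (inv_pos.2 hbpos)
    have hρk : (-ζ ^ m) ^ (2 * k) = 1 := by
      rw [pow_mul, neg_sq, ← pow_mul, ← pow_mul,
        show m * (2 * k) = k * (2 * m) by ring, pow_mul, hζk, pow_mul]
      norm_num
    have hζm : ζ ^ m = Complex.exp ((m * θ : ℝ) * Complex.I) := by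
      rw [hζdef, ← Complex.exp_nat_mul]; congr 1; push_cast; ring
    rcases Nat.eq_zero_or_pos m with rfl | hm
    · have h0 := re_eq_zero_of_pow hρk (by norm_num) hcon 0 (by omega)
      exact hE2 ⟨rfl, by simpa using h0⟩
    · have him : (ζ ^ m).im ≠ 0 := by
        rw [hζm, Complex.exp_ofReal_mul_I_im]
        have hmR : (0 : ℝ) < m := by exact_mod_cast hm
        have hkR : (0 : ℝ) < k := by exact_mod_cast hk
        have hmkR : (m : ℝ) < k := by exact_mod_cast hmk
        refine (Real.sin_pos_of_pos_of_lt_pi (by positivity) ?_).ne'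
        rw [hθ, ← mul_div_assoc, div_lt_iff₀ hkR]
        nlinarith [Real.pi_pos]
      have hρ : -ζ ^ m ≠ 1 := by
        intro h
        have := congrArg Complex.im h
        simp only [Complex.neg_im, Complex.one_im, neg_eq_zero] at this
        exact him this
      have h0 := re_eq_zero_of_pow hρk hρ hcon 0 (by omega)
      have h1 := re_eq_zero_of_pow hρk hρ hcon 1 (by omega)
      rw [pow_zero, mul_one] at h0
      rw [pow_one, Complex.mul_re, h0, zero_mul, zero_sub, neg_eq_zero, Complex.neg_im] at h1
      have him0 : (a * ω ^ m).im = 0 := by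
        rcases mul_eq_zero.1 h1 with h | h
        · exact h
        · exact absurd (neg_eq_zero.1 h) him
      have hω0 : ω ≠ 0 := by
        rintro rfl
        simp at hω
      exact mul_ne_zero ha (pow_ne_zero m hω0) (Complex.ext h0 him0)
end
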